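/- arXiv:1712.08371 — 2 statements merged into one kernel-verified Lean document; each statement's English description precedes it below -/
import Mathlib

section
/- Let α, β > 0 be real with κ := 1 + β − α > 0, and let a, b ∈ ℂ be such that αn + a is not a nonpositive integer for every natural number n. Set h := α^α β^{−β}, ϑ := a − b, A := κ^{−ϑ−1/2} α^{a−1/2} β^{1/2−b}, and for x > 0 set Z(x) := κ (h x)^{1/κ}. Then as x → +∞ along the positive real axis, ₁Ψ₁((α,a); (β,b) | x) / (A · Z(x)^ϑ · e^{Z(x)}) tends to 1. -/
open Complex Filter

/-- The Wright function `₁Ψ₁((α,a); (β,b) | z) = ∑ Γ(αn+a)/Γ(βn+b) · zⁿ/n!`. -/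
noncomputable def wright (α β : ℝ) (a b z : ℂ) : ℂ :=
  ∑' n : ℕ, (Complex.Gamma ((α : ℂ) * n + a) / Complex.Gamma ((β : ℂ) * n + b)) *
    z ^ n / n.factorial

section Helpers

open MeasureTheory Set Topology

lemma absorb (k c : ℝ) (hc : 0 < c) : ∃ C : ℝ, 0 < C ∧ ∀ d : ℝ,
    Real.exp (k * |d|) * Real.exp (-c * d ^ 2) ≤ C * Real.exp (-(c / 2) * d ^ 2) := by
  refine ⟨Real.exp (k ^ 2 / (2 * c)), Real.exp_pos _, fun d => ?_⟩
  rw [← Real.exp_add, ← Real.exp_add]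
  apply Real.exp_le_exp.2
  have h1 : k ^ 2 / (2 * c) + -(c / 2) * d ^ 2 - (k * |d| + -c * d ^ 2)
      = (k - c * |d|) ^ 2 / (2 * c) := by
    have : d ^ 2 = |d| ^ 2 := (sq_abs d).symm
    rw [this]; field_simp; ring
  have h2 : 0 ≤ (k - c * |d|) ^ 2 / (2 * c) := by positivity
  linarith

lemma core (κ c C : ℝ) (hκ : 0 < κ) (hc : 0 < c) (G : ℝ → ℝ → ℂ)
    (hmeas2 : ∀ X, 1 ≤ X → Measurable (G X))
    (hb : ∀ X, 1 ≤ X → ∀ x, 0 < x → ‖G X x‖ ≤ C * Real.exp (-c * (√x - √X) ^ 2))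
    (L : ℂ)
    (hlim : ∀ v : ℝ, Tendsto (fun X => G X ((v + √X) ^ 2)) atTop
      (𝓝 (L * Real.exp (-(2 * κ) * v ^ 2)))) :
    (∀ X, 1 ≤ X → IntegrableOn (G X) (Ioi 0)) ∧
    Tendsto (fun X => ((√X : ℝ) : ℂ)⁻¹ * ∫ x in Ioi (0 : ℝ), G X x) atTop
      (𝓝 (L * (√(2 * Real.pi / κ) : ℝ))) := by
  obtain ⟨Ctwo, hCtwo, habs⟩ := absorb 1 c hc
  have hC : 0 ≤ C := by
    have := (norm_nonneg _).trans (hb 1 le_rfl 1 one_pos)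
    simpa using this
  set H : ℝ → ℝ → ℂ := fun X v =>
    ((√X : ℝ) : ℂ)⁻¹ * (Ioi (0:ℝ)).indicator (fun y => (2 * y : ℝ) • G X (y ^ 2)) (v + √X) with hH
  have hHm : ∀ X, 1 ≤ X → Measurable (H X) := by
    intro X hX
    have h1 : Measurable ((Ioi (0:ℝ)).indicator (fun y => (2 * y : ℝ) • G X (y ^ 2))) := by
      apply Measurable.indicator _ measurableSet_Ioi
      have := (hmeas2 X hX).comp (measurable_id.pow_const 2)
      have h2 : Measurable (fun y : ℝ => (2 * y : ℝ)) := by fun_prop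
      exact h2.smul this
    exact (h1.comp (measurable_id.add_const _)).const_mul _
  have hHb : ∀ X, 1 ≤ X → ∀ v, ‖H X v‖ ≤ 2 * C * Ctwo * Real.exp (-(c / 2) * v ^ 2) := by
    intro X hX v
    have hsX : 1 ≤ √X := by rw [← Real.sqrt_one]; exact Real.sqrt_le_sqrt hX
    by_cases hv : 0 < v + √X
    · have h1 := hb X hX ((v + √X) ^ 2) (by positivity)
      rw [Real.sqrt_sq hv.le, add_sub_cancel_right] at h1
      simp only [hH, indicator_of_mem (show v + √X ∈ Ioi (0:ℝ) from hv), norm_mul, norm_smul,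
        norm_inv, Complex.norm_real, Real.norm_eq_abs]
      rw [abs_of_nonneg (by positivity : (0:ℝ) ≤ √X), abs_of_nonneg hv.le, abs_two]
      have h2 : (√X)⁻¹ * (2 * (v + √X)) ≤ 2 * Real.exp (1 * |v|) := by
        have e1 : (√X)⁻¹ * (2 * (v + √X)) = 2 * (v * (√X)⁻¹ + 1) := by field_simp
        rw [e1]
        have e2 : v * (√X)⁻¹ ≤ |v| := by
          calc v * (√X)⁻¹ ≤ |v| * (√X)⁻¹ := by
                gcongr; exact le_abs_self v
            _ ≤ |v| * 1 := by gcongr; exact inv_le_one_of_one_le₀ hsX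
            _ = |v| := mul_one _
        have := Real.add_one_le_exp |v|
        rw [one_mul]; linarith
      calc (√X)⁻¹ * (2 * (v + √X) * ‖G X ((v + √X) ^ 2)‖)
          = ((√X)⁻¹ * (2 * (v + √X))) * ‖G X ((v + √X) ^ 2)‖ := by ring
        _ ≤ (2 * Real.exp (1 * |v|)) * (C * Real.exp (-c * v ^ 2)) := by gcongr
        _ = 2 * C * (Real.exp (1 * |v|) * Real.exp (-c * v ^ 2)) := by ring
        _ ≤ 2 * C * (Ctwo * Real.exp (-(c / 2) * v ^ 2)) :=
          mul_le_mul_of_nonneg_left (habs v) (by positivity)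
        _ = _ := by ring
    · simp only [hH, indicator_of_notMem (show v + √X ∉ Ioi (0:ℝ) from hv), mul_zero, norm_zero]
      positivity
  have hbi : Integrable (fun v => 2 * C * Ctwo * Real.exp (-(c / 2) * v ^ 2)) :=
    (integrable_exp_neg_mul_sq (by positivity)).const_mul _
  have hHi : ∀ X, 1 ≤ X → Integrable (H X) := fun X hX =>
    hbi.mono' (hHm X hX).aestronglyMeasurable (Eventually.of_forall (hHb X hX))
  have hsX : ∀ X : ℝ, 1 ≤ X → ((√X : ℝ) : ℂ) ≠ 0 := by
    intro X hX
    exact_mod_cast (Real.sqrt_pos.2 (by linarith)).ne'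
  constructor
  · intro X hX
    have h1 := (hHi X hX).const_mul ((√X : ℝ) : ℂ)
    simp only [hH, mul_inv_cancel_left₀ (hsX X hX)] at h1
    have h2 := h1.comp_sub_right (√X)
    simp only [sub_add_cancel] at h2
    rw [integrable_indicator_iff measurableSet_Ioi] at h2
    rw [← integrableOn_Ioi_comp_rpow_iff (G X) (two_ne_zero : (2:ℝ) ≠ 0)]
    refine h2.congr_fun (fun y hy => ?_) measurableSet_Ioi
    norm_num
  · have hI : ∀ X, 1 ≤ X → ((√X : ℝ) : ℂ)⁻¹ * ∫ x in Ioi (0 : ℝ), G X x = ∫ v, H X v := by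
      intro X hX
      simp only [hH]
      rw [integral_const_mul, integral_add_right_eq_self (fun y =>
        (Ioi (0:ℝ)).indicator (fun y => (2 * y : ℝ) • G X (y ^ 2)) y) (√X),
        integral_indicator measurableSet_Ioi,
        ← integral_comp_rpow_Ioi_of_pos (g := G X) (two_pos : (0:ℝ) < 2)]
      congr 1
      refine setIntegral_congr_fun measurableSet_Ioi (fun y hy => ?_)
      norm_num
    have hT : Tendsto (fun X => ∫ v, H X v) atTop
        (𝓝 (∫ v : ℝ, 2 * (L * Real.exp (-(2 * κ) * v ^ 2)))) := by
      apply tendsto_integral_filter_of_dominated_convergence _ _ _ hbi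
      · refine Eventually.of_forall fun v => ?_
        have hs : Tendsto (fun X : ℝ => √X) atTop atTop := Real.tendsto_sqrt_atTop
        have h1 : Tendsto (fun X : ℝ => ((2 * (v * (√X)⁻¹ + 1) : ℝ) : ℂ)) atTop (𝓝 ((2 * (v * 0 + 1) : ℝ) : ℂ)) := by
          apply (Complex.continuous_ofReal.tendsto _).comp
          exact ((hs.inv_tendsto_atTop.const_mul v).add_const 1).const_mul 2
        have h2 := h1.mul (hlim v)
        have h3 : ((2 * (v * 0 + 1) : ℝ) : ℂ) = 2 := by norm_num
        rw [h3] at h2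
        refine h2.congr' ?_
        filter_upwards [hs.eventually_gt_atTop (-v), eventually_ge_atTop 1] with X hX hX1
        have hv : v + √X ∈ Ioi (0:ℝ) := by simp only [mem_Ioi]; linarith
        simp only [hH, indicator_of_mem hv]
        have := hsX X hX1
        rw [Complex.real_smul]
        push_cast
        field_simp
      · filter_upwards [eventually_ge_atTop 1] with X hX using (hHm X hX).aestronglyMeasurable
      · filter_upwards [eventually_ge_atTop 1] with X hX using Eventually.of_forall (hHb X hX)
    have hval : ∫ v : ℝ, 2 * (L * (Real.exp (-(2 * κ) * v ^ 2) : ℂ)) = L * (√(2 * Real.pi / κ) : ℝ) := by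
      rw [integral_const_mul, integral_const_mul]
      have h5 : ∫ v : ℝ, ((Real.exp (-(2 * κ) * v ^ 2) : ℝ) : ℂ) = ((√(Real.pi / (2 * κ)) : ℝ) : ℂ) := by
        rw [integral_complex_ofReal, integral_gaussian]
      rw [h5]
      have : √(2 * Real.pi / κ) = 2 * √(Real.pi / (2 * κ)) := by
        rw [show 2 * Real.pi / κ = 2 ^ 2 * (Real.pi / (2 * κ)) by field_simp,
          Real.sqrt_mul (by positivity), Real.sqrt_sq (by norm_num)]
      rw [this]; push_cast; ring
    rw [← hval]
    refine hT.congr' ?_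
    filter_upwards [eventually_ge_atTop 1] with X hX using (hI X hX).symm

/-- second-order log expansion -/
lemma psi_lim (y : ℝ → ℝ) (s : ℝ) (hy : Tendsto (fun X => √X * (y X - 1)) atTop (𝓝 s)) :
    Tendsto y atTop (𝓝 1) ∧
    Tendsto (fun X => X * (y X - 1 - Real.log (y X))) atTop (𝓝 (s ^ 2 / 2)) := by
  have hs : Tendsto (fun X : ℝ => √X) atTop atTop := Real.tendsto_sqrt_atTop
  have h0 : Tendsto (fun X => y X - 1) atTop (𝓝 0) := by
    have := hs.inv_tendsto_atTop.mul hy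
    rw [zero_mul] at this
    refine this.congr' ?_
    filter_upwards [hs.eventually_gt_atTop 0] with X hX
    simp only [Pi.inv_apply]; field_simp
  have hy1 : Tendsto y atTop (𝓝 1) := by simpa using h0.add_const 1
  refine ⟨hy1, ?_⟩
  have h1 : Tendsto (fun X => (√X * (y X - 1)) ^ 2 / 2) atTop (𝓝 (s ^ 2 / 2)) :=
    (hy.pow 2).div_const 2
  have h2 : Tendsto (fun X => (√X * (y X - 1)) ^ 2 * (|y X - 1| / (1 - |y X - 1|))) atTop (𝓝 0) := by
    have h3 : Tendsto (fun X => |y X - 1|) atTop (𝓝 0) := by simpa using h0.abs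
    have := (hy.pow 2).mul (h3.div (h3.const_sub 1) (by norm_num))
    simpa using this
  have h4 : Tendsto (fun X => X * (y X - 1 - Real.log (y X)) - (√X * (y X - 1)) ^ 2 / 2) atTop (𝓝 0) := by
    refine squeeze_zero_norm' ?_ h2
    have h3 : Tendsto (fun X => |y X - 1|) atTop (𝓝 0) := by simpa using h0.abs
    filter_upwards [h3.eventually_lt_const (by norm_num : (0:ℝ) < 1 / 2), eventually_ge_atTop 1] with X hX hX1
    have h5 := Real.abs_log_sub_add_sum_range_le (x := 1 - y X) (by rw [abs_sub_comm]; linarith) 2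
    simp only [Finset.sum_range_succ, Finset.sum_range_zero] at h5
    rw [abs_sub_comm 1 (y X)] at h5
    norm_num at h5
    have h6 : X * (y X - 1 - Real.log (y X)) - (√X * (y X - 1)) ^ 2 / 2
        = - (X * ((1 - y X) + (1 - y X) ^ 2 / 2 + Real.log (y X))) := by
      rw [mul_pow, Real.sq_sqrt (by linarith)]; ring
    rw [h6, norm_neg, Real.norm_eq_abs, abs_mul, abs_of_nonneg (by linarith : (0:ℝ) ≤ X)]
    calc _ ≤ X * (|y X - 1| ^ 3 / (1 - |y X - 1|)) := by gcongr
      _ = _ := by rw [mul_pow, Real.sq_sqrt (by linarith), ← sq_abs (y X - 1)]; ring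
  simpa using h4.add h1

/-- Stirling's formula for `Γ(t + a)`. -/
def StirlingAt (a : ℂ) : Prop :=
  Tendsto (fun t : ℝ => Complex.Gamma (t + a) *
    cexp (-(((t * Real.log t - t : ℝ) : ℂ) + (a - 1 / 2) * (Real.log t : ℝ)))) atTop
    (𝓝 ((√(2 * Real.pi) : ℝ) : ℂ))

lemma log_div_le (x t : ℝ) (hx : 0 < x) (ht : 0 < t) :
    Real.log (x / t) ≤ 2 * (√x / √t - 1) := by
  have h1 : Real.log (x / t) = 2 * Real.log (√x / √t) := by
    have := Real.log_pow (n := 2) (x := √x / √t)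
    rw [div_pow, Real.sq_sqrt hx.le, Real.sq_sqrt ht.le] at this
    rw [this]; norm_num
  have h2 := Real.log_le_sub_one_of_pos (x := √x / √t) (by positivity)
  rw [h1]; linarith

lemma exponent_le (x t : ℝ) (hx : 0 < x) (ht : 0 < t) :
    t * Real.log (x / t) - x + t ≤ -(√x - √t) ^ 2 := by
  have h1 := mul_le_mul_of_nonneg_left (log_div_le x t hx ht) ht.le
  have h2 : t * (2 * (√x / √t - 1)) = 2 * √x * √t - 2 * t := by
    have : √t ≠ 0 := (Real.sqrt_pos.2 ht).ne'
    have h3 := Real.sq_sqrt ht.le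
    generalize √t = r at *
    subst h3
    field_simp
  have h3 := Real.sq_sqrt ht.le
  have h4 := Real.sq_sqrt hx.le
  nlinarith

lemma stirling_of_one_le (a : ℂ) (ha : 1 ≤ a.re) : StirlingAt a := by
  obtain ⟨C, hC, habs⟩ := absorb (2 * (a.re - 1)) 1 one_pos
  set G : ℝ → ℝ → ℂ := fun t x => cexp ((a - 1) * (Real.log (x / t) : ℝ) +
    ((t * Real.log (x / t) - x + t : ℝ) : ℂ)) with hG
  have hmain := core 1 (1 / 2) C one_pos (by norm_num) G ?_ ?_ 1 ?_
  · have h2 := hmain.2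
    rw [one_mul, div_one] at h2
    refine h2.congr' ?_
    filter_upwards [eventually_ge_atTop 1] with t ht
    have ht0 : 0 < t := by linarith
    rw [Complex.Gamma_eq_integral (by simp; linarith), Complex.GammaIntegral, mul_comm _ (cexp _),
      ← integral_const_mul, ← integral_const_mul]
    refine setIntegral_congr_fun measurableSet_Ioi fun x hx => ?_
    have hx0 : (0:ℝ) < x := hx
    have hsq : ((√t : ℝ) : ℂ)⁻¹ = cexp (-(1 / 2) * (Real.log t : ℝ)) := by
      rw [← Complex.ofReal_inv, ← Real.exp_log (inv_pos.2 (Real.sqrt_pos.2 ht0)), Real.log_inv,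
        Real.log_sqrt ht0.le, Complex.ofReal_exp]
      congr 1
      push_cast; ring
    simp only [hG]
    rw [hsq, Complex.cpow_def_of_ne_zero (by exact_mod_cast hx0.ne'), ← Complex.ofReal_log hx0.le,
      Complex.ofReal_exp, ← Complex.exp_add, ← Complex.exp_add, ← Complex.exp_add,
      Real.log_div hx0.ne' ht0.ne']
    congr 1
    push_cast
    ring
  · intro X _
    simp only [hG]
    fun_prop
  · intro t ht x hx
    have ht0 : 0 < t := by linarith
    simp only [hG, Complex.norm_exp]
    have hst : 1 ≤ √t := by rw [← Real.sqrt_one]; exact Real.sqrt_le_sqrt ht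
    have h1 : Real.log (x / t) ≤ 2 * |√x - √t| := by
      refine (log_div_le x t hx ht0).trans ?_
      have : √x / √t - 1 = (√x - √t) / √t := by field_simp
      rw [this]
      have : (√x - √t) / √t ≤ |√x - √t| := by
        rw [div_le_iff₀ (by positivity)]
        have := le_abs_self (√x - √t)
        nlinarith [abs_nonneg (√x - √t)]
      linarith
    have h2 := exponent_le x t hx ht0
    have h3 : (a.re - 1) * Real.log (x / t) ≤ (a.re - 1) * (2 * |√x - √t|) :=
      mul_le_mul_of_nonneg_left h1 (by linarith)
    refine le_trans ?_ (habs _)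
    rw [← Real.exp_add]
    apply Real.exp_le_exp.2
    rw [Complex.add_re, Complex.re_mul_ofReal, Complex.ofReal_re, Complex.sub_re, Complex.one_re]
    linarith
  · intro v
    have hs : Tendsto (fun X : ℝ => √X) atTop atTop := Real.tendsto_sqrt_atTop
    obtain ⟨hy1, hy2⟩ := psi_lim (fun t => (v + √t) ^ 2 / t) (2 * v) (by
      have := (hs.inv_tendsto_atTop.const_mul (v ^ 2)).add_const (2 * v)
      rw [mul_zero, zero_add] at this
      refine this.congr' ?_
      filter_upwards [eventually_ge_atTop 1] with t ht
      have ht0 : 0 < t := by linarith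
      have h3 := Real.sq_sqrt ht0.le
      have h4 := Real.sqrt_pos.2 ht0
      simp only [Pi.inv_apply]
      generalize √t = r at *
      subst h3
      field_simp
      ring)
    have hl : Tendsto (fun t => Real.log ((v + √t) ^ 2 / t)) atTop (𝓝 0) := by
      rw [← Real.log_one]
      exact hy1.log one_ne_zero
    have h1 : Tendsto (fun t => cexp ((a - 1) * (Real.log ((v + √t) ^ 2 / t) : ℝ) +
        ((-(t * ((v + √t) ^ 2 / t - 1 - Real.log ((v + √t) ^ 2 / t))) : ℝ) : ℂ))) atTop
        (𝓝 (cexp ((a - 1) * ((0 : ℝ) : ℂ) + ((-((2 * v) ^ 2 / 2) : ℝ) : ℂ)))) := by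
      apply (Complex.continuous_exp.tendsto _).comp
      exact (((Complex.continuous_ofReal.tendsto _).comp hl).const_mul _).add
        ((Complex.continuous_ofReal.tendsto _).comp hy2.neg)
    have h2 : cexp ((a - 1) * ((0 : ℝ) : ℂ) + ((-((2 * v) ^ 2 / 2) : ℝ) : ℂ))
        = 1 * (Real.exp (-(2 * 1) * v ^ 2) : ℝ) := by
      rw [one_mul, Complex.ofReal_exp]; congr 1; push_cast; ring
    rw [h2] at h1
    refine h1.congr' ?_
    filter_upwards [eventually_ge_atTop 1] with t ht
    have ht0 : t ≠ 0 := by linarith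
    simp only [hG]
    congr 3
    field_simp
    ring

lemma stirling_step (a : ℂ) (ha : StirlingAt (a + 1)) : StirlingAt a := by
  unfold StirlingAt at *
  have h1 : Tendsto (fun t : ℝ => (1 + a * ((t⁻¹ : ℝ) : ℂ))⁻¹) atTop (𝓝 1) := by
    have h2 : Tendsto (fun t : ℝ => 1 + a * ((t⁻¹ : ℝ) : ℂ)) atTop (𝓝 (1 + a * ((0:ℝ) : ℂ))) :=
      (((Complex.continuous_ofReal.tendsto _).comp tendsto_inv_atTop_zero).const_mul a).const_add 1
    have := h2.inv₀ (by simp)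
    simpa using this
  have h2 := ha.mul h1
  rw [mul_one] at h2
  refine h2.congr' ?_
  filter_upwards [eventually_gt_atTop (max 0 (-a.re))] with t ht
  have ht0 : 0 < t := lt_of_le_of_lt (le_max_left _ _) ht
  have ht1 : -a.re < t := lt_of_le_of_lt (le_max_right _ _) ht
  have hne : (t : ℂ) + a ≠ 0 := by
    intro h
    have := congrArg Complex.re h
    simp at this
    linarith
  have htc : (t : ℂ) ≠ 0 := by exact_mod_cast ht0.ne'
  have he : cexp (-(((t * Real.log t - t : ℝ) : ℂ) + (a - 1 / 2) * (Real.log t : ℝ)))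
      = cexp (-(((t * Real.log t - t : ℝ) : ℂ) + (a + 1 - 1 / 2) * (Real.log t : ℝ))) * t := by
    have : (t : ℂ) = cexp ((Real.log t : ℝ)) := by
      rw [← Complex.ofReal_exp, Real.exp_log ht0]
    conv_rhs => rw [this]
    rw [← Complex.exp_add]
    congr 1; ring
  rw [he, ← add_assoc, Complex.Gamma_add_one _ hne]
  have h3 : (1 + a * ((t⁻¹ : ℝ) : ℂ)) = (t + a) / t := by
    push_cast; field_simp
  rw [h3, inv_div]
  field_simp

lemma stirling (a : ℂ) : StirlingAt a := by
  obtain ⟨N, hN⟩ := exists_nat_ge (1 - a.re)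
  have key : ∀ N : ℕ, ∀ a : ℂ, 1 - a.re ≤ N → StirlingAt a := by
    intro N
    induction N with
    | zero => intro a h; exact stirling_of_one_le a (by simp at h; linarith)
    | succ k ih =>
      intro a h
      apply stirling_step
      apply ih
      push_cast at h
      simp
      linarith
  exact key N a hN

lemma tsum_floor (F : ℕ → ℂ) (hF : IntegrableOn (fun x : ℝ => F ⌊x⌋₊) (Ioi 0)) :
    ∫ x in Ioi (0:ℝ), F ⌊x⌋₊ = ∑' n, F n := by
  have hU : (⋃ n : ℕ, Ico (n : ℝ) (n + 1)) = Ici 0 := by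
    ext x
    simp only [mem_iUnion, mem_Ico, mem_Ici]
    constructor
    · rintro ⟨n, h1, _⟩
      exact (Nat.cast_nonneg n).trans h1
    · intro hx
      exact ⟨⌊x⌋₊, Nat.floor_le hx, Nat.lt_floor_add_one x⟩
  have hfl : ∀ n : ℕ, ∀ x ∈ Ico (n : ℝ) (n + 1), ⌊x⌋₊ = n := fun n x hx =>
    (Nat.floor_eq_iff ((Nat.cast_nonneg n).trans hx.1)).2 hx
  have h := hasSum_integral_iUnion (μ := volume) (f := fun x : ℝ => F ⌊x⌋₊)
    (s := fun n : ℕ => Ico (n : ℝ) (n + 1)) (fun n => measurableSet_Ico) (by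
      intro i j hij
      refine Set.disjoint_left.2 fun x hi hj => hij ?_
      rw [← hfl i x hi, hfl j x hj]) (by
      rw [hU, integrableOn_Ici_iff_integrableOn_Ioi]; exact hF)
  rw [hU, integral_Ici_eq_integral_Ioi] at h
  rw [← h.tsum_eq]
  congr 1
  ext n
  rw [setIntegral_congr_fun measurableSet_Ico (g := fun _ => F n) (fun x hx => by
    simp only [hfl n x hx])]
  simp

lemma abs_log_le (m : ℕ) (X : ℝ) (hX : 1 ≤ X) :
    |Real.log m - Real.log X| ≤ 2 * |√(m:ℝ) - √X| := by
  have hsX : 1 ≤ √X := by rw [← Real.sqrt_one]; exact Real.sqrt_le_sqrt hX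
  have key : ∀ x t : ℝ, 1 ≤ x → 1 ≤ t → Real.log x - Real.log t ≤ 2 * |√x - √t| := by
    intro x t hx ht
    have hst : 1 ≤ √t := by rw [← Real.sqrt_one]; exact Real.sqrt_le_sqrt ht
    rw [← Real.log_div (by linarith) (by linarith)]
    refine (log_div_le x t (by linarith) (by linarith)).trans ?_
    have : √x / √t - 1 = (√x - √t) / √t := by field_simp
    rw [this]
    have : (√x - √t) / √t ≤ |√x - √t| := by
      rw [div_le_iff₀ (by positivity)]
      have := le_abs_self (√x - √t)
      nlinarith [abs_nonneg (√x - √t)]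
    linarith
  rcases Nat.eq_zero_or_pos m with rfl | hm
  · simp only [Nat.cast_zero, Real.log_zero, Real.sqrt_zero, zero_sub, abs_neg]
    rw [abs_of_nonneg (Real.log_nonneg hX), abs_of_nonneg (by linarith)]
    have := key X 1 hX le_rfl
    rw [Real.log_one, Real.sqrt_one, abs_of_nonneg (by linarith)] at this
    linarith
  · have hm1 : (1:ℝ) ≤ m := by exact_mod_cast hm
    refine abs_le.2 ⟨?_, key _ _ hm1 hX⟩
    have := key X m hX hm1
    rw [abs_sub_comm] at this
    linarith

lemma exponent_le_nat (m : ℕ) (X : ℝ) (hX : 1 ≤ X) :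
    (m:ℝ) - m * Real.log m + m * Real.log X - X ≤ -(√(m:ℝ) - √X) ^ 2 := by
  rcases Nat.eq_zero_or_pos m with rfl | hm
  · simp [Real.sq_sqrt (by linarith : (0:ℝ) ≤ X)]
  · have hm1 : (0:ℝ) < m := by exact_mod_cast hm
    have := exponent_le X m (by linarith) hm1
    rw [Real.log_div (by linarith) hm1.ne'] at this
    nlinarith

lemma laplace_sum (κ : ℝ) (hκ : 0 < κ) (D : ℕ → ℂ) (q B : ℂ)
    (hD : Tendsto (fun n : ℕ => D n * cexp (-q * (Real.log n : ℝ))) atTop (𝓝 B)) :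
    Tendsto (fun X : ℝ => (∑' n : ℕ, D n *
        cexp ((κ * ((n:ℝ) - n * Real.log n + n * Real.log X) : ℝ))) *
        cexp (-(q + 1 / 2) * (Real.log X : ℝ) - ((κ * X : ℝ) : ℂ))) atTop
      (𝓝 (B * (√(2 * Real.pi / κ) : ℝ))) := by
  obtain ⟨C₀, hC₀⟩ := hD.norm.bddAbove_range
  have hDb : ∀ n : ℕ, ‖D n‖ ≤ C₀ * Real.exp (q.re * Real.log n) := by
    intro n
    have h1 : ‖D n * cexp (-q * (Real.log n : ℝ))‖ ≤ C₀ := hC₀ ⟨n, rfl⟩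
    rw [norm_mul, Complex.norm_exp, Complex.re_mul_ofReal, Complex.neg_re, neg_mul, Real.exp_neg,
      ← div_eq_mul_inv, div_le_iff₀ (Real.exp_pos _)] at h1
    exact h1
  have hC₀0 : 0 ≤ C₀ := by
    have := (norm_nonneg _).trans (hDb 0)
    simpa using this
  obtain ⟨C₁, hC₁, habs⟩ := absorb (2 * |q.re|) κ hκ
  set F : ℝ → ℕ → ℂ := fun X m => D m * cexp (-q * (Real.log X : ℝ)) *
    cexp ((κ * ((m:ℝ) - m * Real.log m + m * Real.log X - X) : ℝ)) with hF
  have hmain := core κ (κ / 4) (C₀ * C₁ * Real.exp (κ / 2)) hκ (by positivity)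
    (fun X x => F X ⌊x⌋₊) ?_ ?_ B ?_
  · refine hmain.2.congr' ?_
    filter_upwards [eventually_ge_atTop 1] with X hX
    have hX0 : 0 < X := by linarith
    have hsq : ((√X : ℝ) : ℂ)⁻¹ = cexp (-(1 / 2) * (Real.log X : ℝ)) := by
      rw [← Complex.ofReal_inv, ← Real.exp_log (inv_pos.2 (Real.sqrt_pos.2 hX0)), Real.log_inv,
        Real.log_sqrt hX0.le, Complex.ofReal_exp]
      congr 1
      push_cast; ring
    rw [tsum_floor (F X) (hmain.1 X hX), ← tsum_mul_left, ← tsum_mul_right]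
    congr 1
    ext n
    simp only [hF]
    rw [hsq, mul_assoc, mul_assoc, ← Complex.exp_add, mul_left_comm, ← Complex.exp_add,
      ← Complex.exp_add]
    congr 2
    push_cast
    ring
  · intro X _
    exact (measurable_from_nat (f := F X)).comp Nat.measurable_floor
  · intro X hX x hx
    set m := ⌊x⌋₊ with hm
    set e := √(m:ℝ) - √X with he
    set d := √x - √X with hd
    have hmx : (m:ℝ) ≤ x := Nat.floor_le hx.le
    have hxm : x < m + 1 := Nat.lt_floor_add_one x
    have h1 : ‖F X m‖ ≤ C₀ * (Real.exp (2 * |q.re| * |e|) * Real.exp (-κ * e ^ 2)) := by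
      simp only [hF]
      rw [norm_mul, norm_mul, Complex.norm_exp, Complex.norm_exp, Complex.re_mul_ofReal,
        Complex.ofReal_re, Complex.neg_re]
      calc _ ≤ C₀ * Real.exp (q.re * Real.log m) * Real.exp (-q.re * Real.log X) *
            Real.exp (κ * (↑m - ↑m * Real.log ↑m + ↑m * Real.log X - X)) := by
              gcongr; exact hDb m
        _ = C₀ * Real.exp (q.re * (Real.log m - Real.log X) +
            κ * (↑m - ↑m * Real.log ↑m + ↑m * Real.log X - X)) := by
              rw [mul_assoc, mul_assoc, ← Real.exp_add, ← Real.exp_add]; congr 2; ring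
        _ ≤ _ := by
              rw [← Real.exp_add]
              apply mul_le_mul_of_nonneg_left _ hC₀0
              apply Real.exp_le_exp.2
              have h2 := mul_le_mul_of_nonneg_left (exponent_le_nat m X hX) hκ.le
              have h3 : q.re * (Real.log m - Real.log X) ≤ |q.re| * (2 * |e|) := by
                refine (le_abs_self _).trans ?_
                rw [abs_mul]
                exact mul_le_mul_of_nonneg_left (abs_log_le m X hX) (abs_nonneg _)
              linarith
    have h2 : ‖F X m‖ ≤ C₀ * (C₁ * Real.exp (-(κ / 2) * e ^ 2)) :=
      h1.trans (mul_le_mul_of_nonneg_left (habs e) hC₀0)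
    refine h2.trans ?_
    rw [mul_assoc, mul_assoc]
    apply mul_le_mul_of_nonneg_left _ hC₀0
    apply mul_le_mul_of_nonneg_left _ hC₁.le
    rw [← Real.exp_add]
    apply Real.exp_le_exp.2
    have h4 : 0 ≤ d - e := by
      have := Real.sqrt_le_sqrt hmx
      simp only [hd, he]; linarith
    have h5 : d - e ≤ 1 := by
      have : √x ≤ √(m:ℝ) + 1 := by
        rw [Real.sqrt_le_left (by positivity)]
        have := Real.sq_sqrt (Nat.cast_nonneg m : (0:ℝ) ≤ m)
        nlinarith [Real.sqrt_nonneg (m:ℝ)]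
      simp only [hd, he]; linarith
    have h6 : d ^ 2 ≤ 2 * e ^ 2 + 2 := by nlinarith [sq_nonneg (e - (d - e))]
    nlinarith
  · intro v
    have hs : Tendsto (fun X : ℝ => √X) atTop atTop := Real.tendsto_sqrt_atTop
    set m : ℝ → ℕ := fun X => ⌊(v + √X) ^ 2⌋₊ with hm
    have hmT : Tendsto m atTop atTop := by
      apply tendsto_nat_floor_atTop.comp
      exact (tendsto_pow_atTop two_ne_zero).comp (tendsto_atTop_add_const_left _ _ hs)
    have hz : Tendsto (fun X => √X * ((m X : ℝ) / X - 1)) atTop (𝓝 (2 * v)) := by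
      have h1 := (hs.inv_tendsto_atTop.const_mul (v ^ 2)).add_const (2 * v)
      have h2 : Tendsto (fun X => ((m X : ℝ) - (v + √X) ^ 2) * (√X)⁻¹) atTop (𝓝 0) := by
        refine squeeze_zero_norm (fun X => ?_) hs.inv_tendsto_atTop
        have h3 : (m X : ℝ) ≤ (v + √X) ^ 2 := Nat.floor_le (sq_nonneg _)
        have h4 : (v + √X) ^ 2 < m X + 1 := Nat.lt_floor_add_one _
        rw [norm_mul, norm_inv, Real.norm_eq_abs, Real.norm_eq_abs, abs_of_nonneg (Real.sqrt_nonneg X)]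
        have h5 : |(m X : ℝ) - (v + √X) ^ 2| ≤ 1 := abs_le.2 ⟨by linarith, by linarith⟩
        have h6 : 0 ≤ (√X)⁻¹ := by positivity
        simp only [Pi.inv_apply]
        nlinarith
      have h3 := h1.add h2
      rw [mul_zero, zero_add, add_zero] at h3
      refine h3.congr' ?_
      filter_upwards [eventually_ge_atTop 1] with t ht
      have ht0 : 0 < t := by linarith
      have h3 := Real.sq_sqrt ht0.le
      have h4 := Real.sqrt_pos.2 ht0
      simp only [Pi.inv_apply]
      generalize (m t : ℝ) = M
      generalize √t = r at *
      subst h3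
      field_simp
      ring
    obtain ⟨hy1, -⟩ := psi_lim (fun X => (m X : ℝ) / X) (2 * v) hz
    have hz2 : Tendsto (fun X => √X * (((m X : ℝ) / X)⁻¹ - 1)) atTop (𝓝 (-(2 * v))) := by
      have h1 := (hz.div hy1 one_ne_zero).neg
      rw [div_one] at h1
      refine h1.congr' ?_
      filter_upwards [hy1.eventually_ne one_ne_zero] with X hX
      simp only [Pi.div_apply]
      generalize (m X : ℝ) / X = y at *
      field_simp
      ring
    obtain ⟨-, hy2⟩ := psi_lim (fun X => ((m X : ℝ) / X)⁻¹) (-(2 * v)) hz2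
    have hy3 := hy1.mul hy2
    have hl : Tendsto (fun X => Real.log ((m X : ℝ) / X)) atTop (𝓝 0) := by
      rw [← Real.log_one]
      exact hy1.log one_ne_zero
    have hq : Tendsto (fun X => cexp (q * (Real.log ((m X : ℝ) / X) : ℝ))) atTop
        (𝓝 (cexp (q * ((0:ℝ):ℂ)))) :=
      (Complex.continuous_exp.tendsto _).comp
        (((Complex.continuous_ofReal.tendsto _).comp hl).const_mul _)
    have hE : Tendsto (fun X => cexp ((-κ * ((m X : ℝ) / X * (X * (((m X : ℝ) / X)⁻¹ - 1 -
        Real.log (((m X : ℝ) / X)⁻¹)))) : ℝ) : ℂ)) atTop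
        (𝓝 (cexp ((-κ * (1 * ((-(2 * v)) ^ 2 / 2)) : ℝ) : ℂ))) :=
      (Complex.continuous_exp.tendsto _).comp
        ((Complex.continuous_ofReal.tendsto _).comp (hy3.const_mul (-κ)))
    have hall := ((hD.comp hmT).mul hq).mul hE
    have hv : B * cexp (q * ((0:ℝ):ℂ)) * cexp ((-κ * (1 * ((-(2 * v)) ^ 2 / 2)) : ℝ) : ℂ)
        = B * (Real.exp (-(2 * κ) * v ^ 2) : ℝ) := by
      rw [Complex.ofReal_zero, mul_zero, Complex.exp_zero, mul_one, Complex.ofReal_exp]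
      congr 3; ring
    rw [hv] at hall
    refine hall.congr' ?_
    filter_upwards [hmT.eventually_ge_atTop 1, eventually_ge_atTop 1] with X hmX hX
    have hm0 : (m X : ℝ) ≠ 0 := by
      have : m X ≠ 0 := by omega
      exact_mod_cast this
    have hX0 : X ≠ 0 := by linarith
    change D (m X) * cexp (-q * (Real.log (m X) : ℝ)) * _ * _ = F X (m X)
    simp only [hF]
    rw [mul_assoc, mul_assoc, mul_assoc, ← Complex.exp_add, ← Complex.exp_add, ← Complex.exp_add]
    have h9 : -κ * ((m X : ℝ) / X * (X * (((m X : ℝ) / X)⁻¹ - 1 - Real.log (((m X : ℝ) / X)⁻¹))))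
        = κ * ((m X : ℝ) - m X * Real.log (m X) + m X * Real.log X - X) := by
      rw [Real.log_inv, Real.log_div hm0 hX0]
      field_simp
      ring
    rw [h9, Real.log_div hm0 hX0]
    congr 2
    push_cast
    ring

lemma coeff_lim (α β : ℝ) (hα : 0 < α) (hβ : 0 < β) (a b : ℂ) :
    Tendsto (fun n : ℕ => (Complex.Gamma ((α : ℂ) * n + a) / Complex.Gamma ((β : ℂ) * n + b) /
      n.factorial * cexp (-(((1 + β - α) * ((n:ℝ) - n * Real.log n) +
        n * (α * Real.log α - β * Real.log β) : ℝ) : ℂ))) *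
      cexp (-(a - b - 1 / 2) * (Real.log n : ℝ))) atTop
    (𝓝 ((((√(2 * Real.pi) : ℝ) : ℂ))⁻¹ *
      cexp ((a - 1 / 2) * (Real.log α : ℝ) + (1 / 2 - b) * (Real.log β : ℝ)))) := by
  have hs : ((√(2 * Real.pi) : ℝ) : ℂ) ≠ 0 := by
    have : 0 < √(2 * Real.pi) := Real.sqrt_pos.2 (by positivity)
    exact_mod_cast this.ne'
  have hn : Tendsto (fun n : ℕ => (n : ℝ)) atTop atTop := tendsto_natCast_atTop_atTop
  have ha := (stirling a).comp (hn.const_mul_atTop hα)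
  have hb := (stirling b).comp (hn.const_mul_atTop hβ)
  have h1 := (stirling 1).comp hn
  have hall := ((ha.div hb hs).div h1 hs).mul_const
    (cexp ((a - 1 / 2) * (Real.log α : ℝ) + (1 / 2 - b) * (Real.log β : ℝ)))
  rw [div_self hs, one_div ((√(2 * Real.pi) : ℝ) : ℂ)] at hall
  refine hall.congr' ?_
  filter_upwards [eventually_ge_atTop 1] with n hn1
  have hn0 : (n : ℝ) ≠ 0 := by
    have : n ≠ 0 := by omega
    exact_mod_cast this
  simp only [Pi.div_apply, Function.comp_apply]
  have hfac : Complex.Gamma (((n : ℝ) : ℂ) + 1) = n.factorial := by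
    rw [Complex.ofReal_natCast]; exact Complex.Gamma_nat_eq_factorial n
  rw [hfac, mul_div_mul_comm, mul_div_mul_comm, ← Complex.exp_sub, ← Complex.exp_sub, mul_assoc,
    mul_assoc (_ / _ / _) (cexp (-(((1 + β - α) * ((n:ℝ) - n * Real.log n) +
        n * (α * Real.log α - β * Real.log β) : ℝ) : ℂ))) _, ← Complex.exp_add, ← Complex.exp_add, Real.log_mul hα.ne' hn0,
    Real.log_mul hβ.ne' hn0]
  have e1 : ((α * n : ℝ) : ℂ) = (α : ℂ) * n := by push_cast; rfl
  have e2 : ((β * n : ℝ) : ℂ) = (β : ℂ) * n := by push_cast; rfl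
  rw [e1, e2]
  congr 2
  push_cast
  ring

end Helpers

/-- Leading exponential asymptotics of the Wright function on the positive real axis:
`₁Ψ₁((α,a);(β,b) | x) ∼ A Z^ϑ e^Z` as `x → +∞`, where `κ = 1 + β − α`, `h = α^α β^{−β}`,
`ϑ = a − b`, `A = κ^{−ϑ−1/2} α^{a−1/2} β^{1/2−b}` and `Z = κ (hx)^{1/κ}`. -/
theorem wright_leading_asymptotics (α β : ℝ) (hα : 0 < α) (hβ : 0 < β)
    (hκ : 0 < 1 + β - α) (a b : ℂ)
    (hpole : ∀ n m : ℕ, (α : ℂ) * (n : ℂ) + a ≠ -(m : ℂ))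
    (h : ℝ) (hh : h = α ^ α * β ^ (-β))
    (ϑ : ℂ) (hϑ : ϑ = a - b)
    (A : ℂ) (hA : A = ((1 + β - α : ℝ) : ℂ) ^ (-ϑ - 1 / 2) *
      ((α : ℝ) : ℂ) ^ (a - 1 / 2) * ((β : ℝ) : ℂ) ^ (1 / 2 - b))
    (Z : ℝ → ℝ) (hZ : ∀ x : ℝ, Z x = (1 + β - α) * (h * x) ^ (1 / (1 + β - α))) :
    Tendsto (fun x : ℝ =>
        wright α β a b (x : ℂ) / (A * ((Z x : ℝ) : ℂ) ^ ϑ * Complex.exp ((Z x : ℝ) : ℂ)))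
      atTop (nhds 1) := by
  set κ := 1 + β - α with hκd
  have hh0 : 0 < h := by rw [hh]; positivity
  have hlogh : Real.log h = α * Real.log α - β * Real.log β := by
    rw [hh, Real.log_mul (by positivity) (by positivity), Real.log_rpow hα, Real.log_rpow hβ]
    ring
  have hcp : ∀ (y : ℝ) (s : ℂ), 0 < y → (y : ℂ) ^ s = cexp (s * (Real.log y : ℝ)) := by
    intro y s hy
    rw [Complex.cpow_def_of_ne_zero (by exact_mod_cast hy.ne'), ← Complex.ofReal_log hy.le,
      mul_comm]
  have hlap := laplace_sum κ hκ _ _ _ (coeff_lim α β hα hβ a b)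
  have hXT : Tendsto (fun x : ℝ => (h * x) ^ (1 / κ)) atTop atTop :=
    (tendsto_rpow_atTop (by positivity)).comp (tendsto_id.const_mul_atTop hh0)
  have hfin := (hlap.comp hXT).mul_const (cexp ((1 / 2) * (Real.log κ : ℝ) -
    ((a - 1 / 2) * (Real.log α : ℝ) + (1 / 2 - b) * (Real.log β : ℝ))))
  have hlimval : (((√(2 * Real.pi) : ℝ) : ℂ))⁻¹ *
      cexp ((a - 1 / 2) * (Real.log α : ℝ) + (1 / 2 - b) * (Real.log β : ℝ)) *
      ((√(2 * Real.pi / κ) : ℝ) : ℂ) * cexp ((1 / 2) * (Real.log κ : ℝ) -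
    ((a - 1 / 2) * (Real.log α : ℝ) + (1 / 2 - b) * (Real.log β : ℝ))) = 1 := by
    have hs : ((√(2 * Real.pi) : ℝ) : ℂ) ≠ 0 := by
      have : 0 < √(2 * Real.pi) := Real.sqrt_pos.2 (by positivity)
      exact_mod_cast this.ne'
    have hk : ((√κ : ℝ) : ℂ) ≠ 0 := by
      have : 0 < √κ := Real.sqrt_pos.2 hκ
      exact_mod_cast this.ne'
    have hk2 : cexp ((1 / 2) * (Real.log κ : ℝ)) = ((√κ : ℝ) : ℂ) := by
      rw [← Real.exp_log (Real.sqrt_pos.2 hκ), Real.log_sqrt hκ.le, Complex.ofReal_exp]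
      congr 1; push_cast; ring
    rw [Complex.exp_sub, hk2, Real.sqrt_div (by positivity)]
    have := Complex.exp_ne_zero
      ((a - 1 / 2) * (Real.log α : ℝ) + (1 / 2 - b) * (Real.log β : ℝ))
    generalize cexp ((a - 1 / 2) * (Real.log α : ℝ) + (1 / 2 - b) * (Real.log β : ℝ)) = K at *
    rw [Complex.ofReal_div]
    field_simp
  rw [hlimval] at hfin
  refine hfin.congr' ?_
  filter_upwards [eventually_gt_atTop 0] with x hx
  simp only [Function.comp_apply]
  have hX0 : 0 < (h * x) ^ (1 / κ) := by positivity
  have hlX : κ * Real.log ((h * x) ^ (1 / κ)) = Real.log h + Real.log x := by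
    rw [Real.log_rpow (by positivity), Real.log_mul hh0.ne' hx.ne']
    field_simp
  rw [hZ]
  generalize (h * x) ^ (1 / κ) = X at *
  rw [hA, hcp _ _ hκ, hcp _ _ hα, hcp _ _ hβ, hcp _ _ (by positivity), Real.log_mul hκ.ne' hX0.ne',
    div_eq_mul_inv (wright α β a b x), ← Complex.exp_add, ← Complex.exp_add, ← Complex.exp_add, ← Complex.exp_add,
    ← Complex.exp_neg, mul_assoc, ← Complex.exp_add]
  congr 1
  · unfold wright
    congr 1
    ext n
    have hxn : (x : ℂ) ^ n = cexp ((n * Real.log x : ℝ) : ℂ) := by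
      rw [← Complex.ofReal_exp, mul_comm, Real.exp_mul, Real.exp_log hx, Real.rpow_natCast]
      push_cast; rfl
    rw [mul_assoc, ← Complex.exp_add, mul_div_right_comm, hxn]
    congr 2
    rw [← Complex.ofReal_neg, ← Complex.ofReal_add]
    congr 1
    rw [← hlogh]
    linear_combination (n:ℝ) * hlX
  · congr 1
    rw [hϑ]
    push_cast
    ring
end

section
/- Let α, β > 0 be real with κ := 1 + β − α > 0, and let a, b ∈ ℂ be such that αn + a is not a nonpositive integer for every natural number n. Set h := α^α β^{−β}, ϑ := a − b, A := κ^{−ϑ−1/2} α^{a−1/2} β^{1/2−b}, Z(x) := κ (h x)^{1/κ}, and c₁ := (1/(12αβ)) · { α(α−1)(1−6b+6b²) + β(β+1)(1−6a+6a²) + αβ[α − β − 2(1 + 6ab − 6b)] }. Then as x → +∞ along the positive real axis, ₁Ψ₁((α,a); (β,b) | x) = A · Z(x)^ϑ · e^{Z(x)} · ( 1 + c₁ / Z(x) + O(Z(x)^{−2}) ). -/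
open Complex Filter Asymptotics

section Stirling

open scoped Topology

/-- normalised Gamma -/
noncomputable def stS (a : ℂ) (x : ℝ) : ℂ :=
  Complex.Gamma (x + a) * cexp (x - (x + a - 1 / 2) * (Real.log x : ℝ)) / ((√(2 * Real.pi) : ℝ) : ℂ)

noncomputable def stP (a : ℂ) : ℂ := (6 * a ^ 2 - 6 * a + 1) / 12

/-- one-step error exponent -/
noncomputable def stE (a : ℂ) (x : ℝ) : ℂ :=
  Complex.log (1 + a / x) + 1 - (x + a + 1 / 2) * Complex.log (1 + 1 / (x : ℂ))
    + stP a * (1 / x - 1 / (x + 1))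

lemma stS_step (a : ℂ) (x : ℝ) (hx : 0 < x) (hxa : 0 < (x + a).re) :
    stS a (x + 1) * cexp (- stP a / ((x + 1 : ℝ) : ℂ)) =
      stS a x * cexp (- stP a / x) * cexp (stE a x) := by
  have hx0 : (x : ℂ) ≠ 0 := by exact_mod_cast hx.ne'
  have hx1 : (x : ℂ) + 1 ≠ 0 := by exact_mod_cast (by positivity : x + 1 ≠ 0)
  have hne : (x : ℂ) + a ≠ 0 := by
    intro h; rw [h] at hxa; simp at hxa
  have h1 : Complex.Gamma (((x + 1 : ℝ) : ℂ) + a) = (x + a) * Complex.Gamma (x + a) := by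
    rw [← Complex.Gamma_add_one _ hne]; congr 1; push_cast; ring
  have h2 : Complex.log (1 + 1 / (x : ℂ)) = ((Real.log (x + 1) : ℝ) : ℂ) - ((Real.log x : ℝ) : ℂ) := by
    rw [← Complex.ofReal_sub, ← Real.log_div (by positivity) hx.ne', Complex.ofReal_log (by positivity)]
    congr 1; push_cast; field_simp
  have h3 : cexp (Complex.log (1 + a / x)) = (x + a) * cexp (-((Real.log x : ℝ) : ℂ)) := by
    rw [Complex.exp_log, Complex.exp_neg, ← Complex.ofReal_exp, Real.exp_log hx]
    · field_simp
    · intro h; apply hne; field_simp at h; simpa using h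
  unfold stS stE
  rw [h1, h2, show ∀ u v w : ℂ, u + 1 - v + w = u + (1 - v + w) by intros; ring, Complex.exp_add (Complex.log _), h3]
  have : ∀ A B C D E F G H J : ℂ, cexp D * cexp E = cexp F * cexp G * (cexp H * cexp J) → A * B * cexp D / C * cexp E
      = B * cexp F / C * cexp G * (A * cexp H * cexp J) := by
    intro A B C D E F G H J h
    calc _ = A * B / C * (cexp D * cexp E) := by ring
      _ = _ := by rw [h]; ring
  apply this
  rw [← Complex.exp_add, ← Complex.exp_add, ← Complex.exp_add, ← Complex.exp_add]
  congr 1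
  push_cast
  field_simp
  ring

lemma stE_bound (a : ℂ) : ∃ K : ℝ, 0 < K ∧ ∀ x : ℝ, 2 * (‖a‖ + 1) ≤ x → ‖stE a x‖ ≤ K / x ^ 3 := by
  refine ⟨2 * ‖a‖ ^ 3 + (1 + ‖a‖ + 1) * 2 + (‖a‖ + 1) + ‖stP a‖ , by positivity, ?_⟩
  intro x hx
  have hx2 : 2 ≤ x := by linarith [norm_nonneg a]
  have hx0 : (0:ℝ) < x := by linarith
  have hxc : (x : ℂ) ≠ 0 := by exact_mod_cast hx0.ne'
  have hx1 : (x : ℂ) + 1 ≠ 0 := by exact_mod_cast (by positivity : x + 1 ≠ 0)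
  have n1 : ‖a / (x:ℂ)‖ = ‖a‖ / x := by rw [norm_div]; simp [abs_of_pos hx0]
  have n2 : ‖1 / (x:ℂ)‖ = 1 / x := by rw [norm_div]; simp [abs_of_pos hx0]
  have b1 : ‖a‖ / x ≤ 1 / 2 := by rw [div_le_iff₀ hx0]; linarith
  have b2 : 1 / x ≤ 1 / 2 := by rw [div_le_iff₀ hx0]; linarith
  have e1 := Complex.norm_log_sub_logTaylor_le 2 (z := a / x) (by rw [n1]; linarith)
  have e2 := Complex.norm_log_sub_logTaylor_le 3 (z := 1 / (x:ℂ)) (by rw [n2]; linarith)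
  rw [n1] at e1
  rw [n2] at e2
  have i1 : (1 - ‖a‖ / x)⁻¹ ≤ 2 := by
    rw [inv_le_comm₀ (by linarith) (by norm_num)]; linarith
  have i2 : (1 - 1 / x)⁻¹ ≤ 2 := by
    rw [inv_le_comm₀ (by linarith) (by norm_num)]; linarith
  have e1' : ‖Complex.log (1 + a / x) - Complex.logTaylor (2 + 1) (a / x)‖ ≤ 2 * ‖a‖ ^ 3 / x ^ 3 := by
    refine e1.trans ?_
    have : (‖a‖ / x) ^ (2 + 1) * (1 - ‖a‖ / x)⁻¹ ≤ (‖a‖ / x) ^ (2 + 1) * 2 := by gcongr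
    calc _ ≤ (‖a‖ / x) ^ (2 + 1) * (1 - ‖a‖ / x)⁻¹ := by
          apply div_le_self
          · have : 0 ≤ (1 - ‖a‖ / x)⁻¹ := inv_nonneg.2 (by linarith)
            positivity
          · norm_num
      _ ≤ _ := this
      _ = _ := by rw [div_pow]; field_simp; ring
  have e2' : ‖Complex.log (1 + 1 / (x:ℂ)) - Complex.logTaylor (3 + 1) (1 / (x:ℂ))‖ ≤ 2 / x ^ 4 := by
    refine e2.trans ?_
    have : (1 / x) ^ (3 + 1) * (1 - 1 / x)⁻¹ ≤ (1 / x) ^ (3 + 1) * 2 := by gcongr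
    calc _ ≤ (1 / x) ^ (3 + 1) * (1 - 1 / x)⁻¹ := by
          apply div_le_self
          · have : 0 ≤ (1 - 1 / x)⁻¹ := inv_nonneg.2 (by linarith)
            positivity
          · norm_num
      _ ≤ _ := this
      _ = _ := by rw [div_pow]; field_simp; ring
  have key : stE a x = (Complex.log (1 + a / x) - Complex.logTaylor (2 + 1) (a / x))
      - (x + a + 1 / 2) * (Complex.log (1 + 1 / (x:ℂ)) - Complex.logTaylor (3 + 1) (1 / (x:ℂ)))
      - (a + 1 / 2) / 3 / x ^ 3 - stP a / (x ^ 2 * (x + 1)) := by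
    simp only [stE, Complex.logTaylor, Finset.sum_range_succ, Finset.sum_range_zero, stP]
    push_cast
    field_simp
    ring
  have n3 : ‖(x:ℂ) + a + 1 / 2‖ ≤ x * (1 + ‖a‖ + 1) := by
    calc _ ≤ ‖(x:ℂ)‖ + ‖a‖ + ‖(1/2 : ℂ)‖ := norm_add₃_le
      _ = x + ‖a‖ + 1 / 2 := by simp [abs_of_pos hx0]
      _ ≤ _ := by nlinarith [norm_nonneg a]
  have n4 : ‖(a + 1 / 2) / 3 / (x:ℂ) ^ 3‖ ≤ (‖a‖ + 1) / x ^ 3 := by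
    rw [norm_div, norm_div, norm_pow, Complex.norm_real, Real.norm_of_nonneg hx0.le]
    gcongr
    calc ‖a + 1/2‖ / ‖(3:ℂ)‖ ≤ ‖a + 1 / 2‖ := by apply div_le_self (norm_nonneg _); simp
      _ ≤ ‖a‖ + ‖(1/2 : ℂ)‖ := norm_add_le _ _
      _ ≤ _ := by simp; norm_num
  have n5 : ‖stP a / ((x:ℂ) ^ 2 * (x + 1))‖ ≤ ‖stP a‖ / x ^ 3 := by
    have : (x:ℂ) ^ 2 * (x + 1) = ((x ^ 2 * (x + 1) : ℝ) : ℂ) := by push_cast; ring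
    rw [norm_div, this, Complex.norm_real, Real.norm_of_nonneg (by positivity)]
    gcongr
    nlinarith [sq_nonneg x]
  rw [key]
  calc _ ≤ ‖Complex.log (1 + a / x) - Complex.logTaylor (2 + 1) (a / x)‖ + ‖((x:ℂ) + a + 1 / 2)‖ * ‖(Complex.log (1 + 1 / (x:ℂ)) - Complex.logTaylor (3 + 1) (1 / (x:ℂ)))‖ + ‖(a + 1 / 2) / 3 / (x:ℂ) ^ 3‖ + ‖stP a / ((x:ℂ) ^ 2 * (x + 1))‖ := by
        rw [← norm_mul]
        refine (norm_sub_le _ _).trans (add_le_add_left ?_ _)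
        refine (norm_sub_le _ _).trans (add_le_add_left ?_ _)
        exact norm_sub_le _ _
    _ ≤ 2 * ‖a‖ ^ 3 / x ^ 3 + x * (1 + ‖a‖ + 1) * (2 / x ^ 4) + (‖a‖ + 1) / x ^ 3 + ‖stP a‖ / x ^ 3 := by gcongr
    _ = _ := by field_simp

lemma stS_tendsto (a : ℂ) (x : ℝ) (hx : 0 < x) (hxa : 0 < (x + a).re) :
    Tendsto (fun n : ℕ => stS a (x + n)) atTop (𝓝 1) := by
  rw [← tendsto_add_atTop_iff_nat 1]
  set s : ℂ := x + a with hs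
  have hpole : ∀ k : ℕ, s ≠ -k := by
    intro k h; rw [h] at hxa; simp at hxa; linarith [k.cast_nonneg (α := ℝ)]
  have hG : Complex.Gamma s ≠ 0 := Complex.Gamma_ne_zero hpole
  have t1 := (Complex.GammaSeq_tendsto_Gamma s)
  have t1' := (tendsto_const_nhds (x := Complex.Gamma s)).div t1 hG
  rw [div_self hG] at t1'
  have t2 : Tendsto (fun n => ((Stirling.stirlingSeq n / √Real.pi : ℝ) : ℂ)) atTop (𝓝 1) := by
    have := Stirling.tendsto_stirlingSeq_sqrt_pi.div_const (√Real.pi)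
    rw [div_self (by positivity)] at this
    exact_mod_cast (Complex.continuous_ofReal.tendsto _).comp this
  have t3 : Tendsto (fun n : ℕ => (n : ℝ) * Real.log (1 + (x + 1) / n)) atTop (𝓝 (x + 1)) :=
    (Real.tendsto_mul_log_one_add_div_atTop (x + 1)).comp tendsto_natCast_atTop_atTop
  have t4 : Tendsto (fun n : ℕ => Real.log (1 + (x + 1) / n)) atTop (𝓝 0) := by
    have : Tendsto (fun n : ℕ => 1 + (x + 1) / (n:ℝ)) atTop (𝓝 (1 + 0)) :=
      tendsto_const_nhds.add (tendsto_const_div_atTop_nhds_zero_nat _)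
    rw [add_zero] at this
    have h := (Real.continuousAt_log one_ne_zero).tendsto.comp this
    rw [Real.log_one] at h
    exact h
  have t5 : Tendsto (fun n : ℕ => cexp ((x + 1) - (((n : ℝ) * Real.log (1 + (x + 1) / n) : ℝ) : ℂ) - (s + 1 / 2) * ((Real.log (1 + (x + 1) / n) : ℝ) : ℂ))) atTop (𝓝 1) := by
    have t3' := (Complex.continuous_ofReal.tendsto _).comp t3
    have t4' := (Complex.continuous_ofReal.tendsto _).comp t4
    have := (((tendsto_const_nhds (x := (x : ℂ) + 1)).sub t3').sub (t4'.const_mul (s + 1 / 2)))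
    have := (Complex.continuous_exp.tendsto _).comp this
    have e : cexp ((x:ℂ) + 1 - ((x + 1 : ℝ) : ℂ) - (s + 1 / 2) * ((0:ℝ) : ℂ)) = 1 := by simp
    rw [e] at this
    exact this
  have := (t1'.mul t2).mul t5
  simp only [mul_one] at this
  refine this.congr' ?_
  filter_upwards [eventually_gt_atTop 0] with n hn
  have hn0 : (0 : ℝ) < n := by exact_mod_cast hn
  have hnc : (n : ℂ) ≠ 0 := by exact_mod_cast hn.ne'
  have g1 : ∀ m : ℕ, Complex.Gamma (s + m) = (∏ j ∈ Finset.range m, (s + j)) * Complex.Gamma s := by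
    intro m
    induction m with
    | zero => simp
    | succ m ih =>
      rw [Finset.prod_range_succ, mul_right_comm, ← ih]
      have : s + m ≠ 0 := fun h => hpole m (by linear_combination h)
      rw [mul_comm, ← Complex.Gamma_add_one _ this]
      congr 1; push_cast; ring
  have g2 := g1 (n + 1)
  have g3 : (∏ j ∈ Finset.range (n + 1), (s + (j:ℂ))) ≠ 0 := by
    rw [Finset.prod_ne_zero_iff]
    intro j _ h; exact hpole j (by linear_combination h)
  have g4 : (n.factorial : ℂ) ≠ 0 := by exact_mod_cast n.factorial_ne_zero
  have c1 : (n : ℂ) ^ s = cexp (s * ((Real.log n : ℝ) : ℂ)) := by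
    rw [Complex.cpow_def_of_ne_zero hnc, Complex.ofReal_log hn0.le, mul_comm]; simp
  have c2 : √(2 * (n : ℝ)) * √Real.pi = √(2 * Real.pi) * Real.exp (Real.log n / 2) := by
    rw [← Real.sqrt_mul (by positivity), ← Real.log_sqrt hn0.le, Real.exp_log (by positivity), ← Real.sqrt_mul (by positivity)]
    congr 1; ring
  have c3 : ((n : ℝ) / Real.exp 1) ^ n = Real.exp (n * Real.log n - n) := by
    have : (n : ℝ) / Real.exp 1 = Real.exp (Real.log n - 1) := by rw [Real.exp_sub, Real.exp_log hn0]
    rw [this, ← Real.exp_nat_mul]; congr 1; ring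
  have c4 : Real.log (1 + (x + 1) / n) = Real.log (x + (n + 1 : ℕ)) - Real.log n := by
    rw [← Real.log_div (by positivity) hn0.ne']
    congr 1; push_cast; field_simp; ring
  have c5 : ((Stirling.stirlingSeq n / √Real.pi : ℝ) : ℂ) = n.factorial / (((√(2 * Real.pi) : ℝ) : ℂ) * (cexp (((Real.log n : ℝ) : ℂ) / 2) * cexp (n * ((Real.log n : ℝ) : ℂ) - n))) := by
    have : Stirling.stirlingSeq n / √Real.pi = n.factorial / (√(2 * Real.pi) * (Real.exp (Real.log n / 2) * Real.exp (n * Real.log n - n))) := by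
      rw [← mul_assoc, ← c2, ← c3, Stirling.stirlingSeq]
      field_simp
    rw [this]; push_cast; rfl
  have c6 : Complex.Gamma (((x + (n + 1 : ℕ) : ℝ) : ℂ) + a) = (∏ j ∈ Finset.range (n+1), (s + j)) * Complex.Gamma s := by
    rw [← g2]; congr 1; rw [hs]; push_cast; ring
  have c7 : (((√(2 * Real.pi) : ℝ) : ℂ)) ≠ 0 := by
    exact_mod_cast (by positivity : √(2 * Real.pi) ≠ 0)
  simp only [Pi.div_apply]
  rw [c5, Complex.GammaSeq, c1, c4, stS, c6]
  set L : ℂ := ((Real.log n : ℝ) : ℂ) with hL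
  set M : ℂ := ((Real.log (x + (n + 1 : ℕ)) : ℝ) : ℂ) with hM
  set E : ℂ := ((x:ℂ) + 1 - (((n:ℝ) * (Real.log (x + (n + 1 : ℕ)) - Real.log n) : ℝ) : ℂ) - (s + 1 / 2) * ((Real.log (x + (n + 1 : ℕ)) - Real.log n : ℝ) : ℂ)) with hE
  have key : cexp E = cexp (s * L) * (cexp (L / 2) * cexp (n * L - n)) * cexp (((x + (n + 1 : ℕ) : ℝ) : ℂ) - (((x + (n + 1 : ℕ) : ℝ) : ℂ) + a - 1 / 2) * M) := by
    rw [← Complex.exp_add, ← Complex.exp_add, ← Complex.exp_add]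
    congr 1
    rw [hE, hs]
    simp only [Complex.ofReal_add, Complex.ofReal_mul, Complex.ofReal_sub, ← hM, ← hL, Complex.ofReal_natCast]
    push_cast
    ring
  rw [key]
  field_simp

lemma sum_inv_cube (x : ℝ) (hx : 1 ≤ x) (n : ℕ) :
    ∑ k ∈ Finset.range n, 1 / (x + k) ^ 3 ≤ 2 / x ^ 2 - 2 / (x + n) ^ 2 := by
  induction n with
  | zero => simp
  | succ n ih =>
    rw [Finset.sum_range_succ]
    have hu : 1 ≤ x + n := by linarith [n.cast_nonneg (α := ℝ)]
    have : 1 / (x + n) ^ 3 ≤ 2 / (x + n) ^ 2 - 2 / (x + n + 1) ^ 2 := by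
      set u := x + n
      have e : 2 / u ^ 2 - 2 / (u + 1) ^ 2 - 1 / u ^ 3 = (3 * u ^ 2 - 1) / (u ^ 3 * (u + 1) ^ 2) := by
        field_simp; ring
      have : 0 ≤ (3 * u ^ 2 - 1) / (u ^ 3 * (u + 1) ^ 2) := by
        apply div_nonneg <;> [nlinarith; positivity]
      linarith
    push_cast
    rw [← add_assoc]
    linarith

lemma stS_near (a : ℂ) : ∃ K X : ℝ, 0 < K ∧ ∀ x : ℝ, X ≤ x →
    ‖stS a x * cexp (- stP a / x) - 1‖ ≤ K / x ^ 2 := by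
  obtain ⟨K, hK, hE⟩ := stE_bound a
  refine ⟨4 * K, max (2 * (‖a‖ + 1)) (2 * K + 1), by positivity, ?_⟩
  intro x hx
  have hx1 := (le_max_left _ _).trans hx
  have hx2 := (le_max_right _ _).trans hx
  have hx0 : 2 ≤ x := by linarith [norm_nonneg a]
  have hre : ∀ u : ℝ, x ≤ u → 0 < ((u:ℂ) + a).re := by
    intro u hu
    have := Complex.abs_re_le_norm a
    have := neg_abs_le a.re
    simp; linarith
  have hprod : ∀ n : ℕ, stS a (x + n) * cexp (- stP a / ((x + n : ℝ) : ℂ)) =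
      stS a x * cexp (- stP a / x) * cexp (∑ k ∈ Finset.range n, stE a (x + k)) := by
    intro n
    induction n with
    | zero => simp
    | succ n ih =>
      rw [Finset.sum_range_succ, Complex.exp_add, ← mul_assoc, ← ih, ← stS_step a (x + n) (by positivity) (hre _ (by linarith [n.cast_nonneg (α := ℝ)]))]
      push_cast
      simp only [add_assoc]
  have hlim : Tendsto (fun n : ℕ => stS a (x + n) * cexp (- stP a / ((x + n : ℝ) : ℂ))) atTop (𝓝 1) := by
    have h1 := stS_tendsto a x (by linarith) (hre x le_rfl)
    have h2 : Tendsto (fun n : ℕ => - stP a / ((x + n : ℝ) : ℂ)) atTop (𝓝 0) := by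
      rw [tendsto_zero_iff_norm_tendsto_zero]
      have : Tendsto (fun n : ℕ => ‖stP a‖ / (x + n)) atTop (𝓝 0) :=
        tendsto_const_nhds.div_atTop (tendsto_atTop_add_const_left _ _ tendsto_natCast_atTop_atTop)
      refine this.congr fun n => ?_
      rw [norm_div, norm_neg, Complex.norm_real, Real.norm_of_nonneg (by positivity)]
    have h3 := (Complex.continuous_exp.tendsto _).comp h2
    rw [Complex.exp_zero] at h3
    simpa using h1.mul h3
  set V := stS a x * cexp (- stP a / x)
  have hsum : ∀ n : ℕ, ‖∑ k ∈ Finset.range n, stE a (x + k)‖ ≤ 2 * K / x ^ 2 := by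
    intro n
    calc _ ≤ ∑ k ∈ Finset.range n, ‖stE a (x + k)‖ := norm_sum_le _ _
      _ ≤ ∑ k ∈ Finset.range n, K * (1 / (x + k) ^ 3) := by
          apply Finset.sum_le_sum; intro k _
          rw [mul_one_div]
          apply hE; linarith [k.cast_nonneg (α := ℝ)]
      _ ≤ K * (2 / x ^ 2) := by
          rw [← Finset.mul_sum]
          gcongr
          refine (sum_inv_cube x (by linarith) n).trans ?_
          have : 0 ≤ 2 / (x + n) ^ 2 := by positivity
          linarith
      _ = _ := by ring
  have hδ : 2 * K / x ^ 2 ≤ 1 := by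
    rw [div_le_one (by positivity)]; nlinarith
  have hbd : ∀ n : ℕ, ‖V - 1‖ ≤ 4 * K / x ^ 2 + 3 * ‖stS a (x + n) * cexp (- stP a / ((x + n : ℝ) : ℂ)) - 1‖ := by
    intro n
    rw [hprod n]
    set D := ∑ k ∈ Finset.range n, stE a (x + k)
    have hD := hsum n
    have e : V - 1 = (cexp (-D) - 1) + cexp (-D) * (V * cexp D - 1) := by
      have : cexp (-D) * cexp D = 1 := by rw [← Complex.exp_add]; simp
      linear_combination (-V) * this
    have b1 : ‖cexp (-D) - 1‖ ≤ 4 * K / x ^ 2 := by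
      have := Complex.norm_exp_sub_one_le (x := -D) (by rw [norm_neg]; linarith)
      rw [norm_neg] at this
      calc _ ≤ 2 * ‖D‖ := this
        _ ≤ 2 * (2 * K / x ^ 2) := by gcongr
        _ = _ := by ring
    have b2 : ‖cexp (-D)‖ ≤ 3 := by
      calc _ ≤ ‖cexp (-D) - 1‖ + ‖(1:ℂ)‖ := by simpa using norm_add_le (cexp (-D) - 1) 1
        _ ≤ _ := by
          have : 4 * K / x ^ 2 = 2 * (2 * K / x ^ 2) := by ring
          simp; linarith
    rw [e]
    refine (norm_add_le _ _).trans ?_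
    rw [norm_mul]
    gcongr
  have hl2 : Tendsto (fun n : ℕ => 4 * K / x ^ 2 + 3 * ‖stS a (x + n) * cexp (- stP a / ((x + n : ℝ) : ℂ)) - 1‖) atTop (𝓝 (4 * K / x ^ 2)) := by
    have := ((hlim.sub_const 1).norm.const_mul 3).const_add (4 * K / x ^ 2)
    simpa using this
  exact ge_of_tendsto hl2 (Eventually.of_forall hbd)

lemma stS_asymp (a : ℂ) :
    (fun x : ℝ => stS a x - (1 + stP a / x)) =O[atTop] fun x : ℝ => (x ^ 2)⁻¹ := by
  obtain ⟨K, X, hK, hV⟩ := stS_near a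
  rw [isBigO_iff]
  refine ⟨3 * K + ‖stP a‖ ^ 2, ?_⟩
  filter_upwards [eventually_ge_atTop X, eventually_ge_atTop 1, eventually_ge_atTop ‖stP a‖] with x h1 h2 h3
  have hx0 : 0 < x := by linarith
  specialize hV x h1
  have hn : ‖stP a / (x : ℂ)‖ = ‖stP a‖ / x := by
    rw [norm_div, Complex.norm_real, Real.norm_of_nonneg hx0.le]
  have hn1 : ‖stP a‖ / x ≤ 1 := by rw [div_le_one hx0]; exact h3
  have e : stS a x - (1 + stP a / x) = cexp (stP a / x) * (stS a x * cexp (- stP a / x) - 1) + (cexp (stP a / x) - 1 - stP a / x) := by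
    have : cexp (stP a / x) * cexp (- stP a / x) = 1 := by rw [← Complex.exp_add]; ring_nf; simp
    linear_combination (-stS a x) * this
  have b1 := Complex.norm_exp_sub_one_sub_id_le (x := stP a / x) (by rw [hn]; exact hn1)
  have b2 : ‖cexp (stP a / x)‖ ≤ 3 := by
    rw [Complex.norm_exp]
    calc _ ≤ Real.exp 1 := Real.exp_le_exp.2 ((Complex.re_le_norm _).trans (by rw [hn]; exact hn1))
      _ ≤ 3 := by linarith [Real.exp_one_lt_d9]
  rw [e, Real.norm_of_nonneg (by positivity)]
  rw [hn] at b1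
  calc _ ≤ _ := norm_add_le _ _
    _ ≤ 3 * (K / x ^ 2) + (‖stP a‖ / x) ^ 2 := by rw [norm_mul]; gcongr
    _ = _ := by rw [div_pow]; field_simp

end Stirling

section Helpers

open scoped Topology FourierTransform
open MeasureTheory Set

lemma intOn_gamma (p b : ℝ) (hp : -1 < p) (hb : 0 < b) :
    IntegrableOn (fun t : ℝ => t ^ p * Real.exp (-b * t)) (Ioi 0) := by
  have := integrableOn_rpow_mul_exp_neg_mul_rpow (p := 1) hp one_pos hb
  simpa using this

lemma cont_cpow_Ioi (a : ℂ) : ContinuousOn (fun t : ℝ => (t : ℂ) ^ a) (Ioi 0) := by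
  intro t ht
  apply ContinuousAt.continuousWithinAt
  exact (continuousAt_cpow_const (Or.inl (by simpa using ht))).comp Complex.continuous_ofReal.continuousAt

lemma norm_cpow_mul_exp (a r : ℂ) (t : ℝ) (ht : 0 < t) :
    ‖(t : ℂ) ^ a * cexp (-(r * t))‖ = t ^ a.re * Real.exp (-r.re * t) := by
  rw [norm_mul, Complex.norm_cpow_eq_rpow_re_of_pos ht, Complex.norm_exp]
  simp

lemma intOn_cpow_mul_exp (a r : ℂ) (ha : -1 < a.re) (hr : 0 < r.re) :
    IntegrableOn (fun t : ℝ => (t : ℂ) ^ a * cexp (-(r * t))) (Ioi 0) := by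
  refine (intOn_gamma a.re r.re ha hr).mono' ?_ ?_
  · refine ContinuousOn.aestronglyMeasurable ?_ measurableSet_Ioi
    exact (cont_cpow_Ioi a).mul (by fun_prop)
  · refine (ae_restrict_iff' measurableSet_Ioi).2 (Eventually.of_forall fun t ht => ?_)
    rw [norm_cpow_mul_exp a r t ht]

lemma laplace_diff (a r : ℂ) (ha : 0 < a.re) (hr : 0 < r.re) :
    DifferentiableAt ℂ (fun r : ℂ => ∫ t in Ioi (0:ℝ), (t : ℂ) ^ (a - 1) * cexp (-(r * t))) r := by
  have hε : 0 < r.re / 2 := by linarith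
  have hball : ∀ z ∈ Metric.ball r (r.re / 2), r.re / 2 ≤ z.re := by
    intro z hz
    have h1 := Complex.abs_re_le_norm (z - r)
    rw [Metric.mem_ball, dist_eq_norm] at hz
    have := neg_abs_le (z - r).re
    simp at this h1
    linarith
  have := hasDerivAt_integral_of_dominated_loc_of_deriv_le (𝕜 := ℂ) (μ := volume.restrict (Ioi (0:ℝ)))
    (F := fun (r : ℂ) (t : ℝ) => (t : ℂ) ^ (a - 1) * cexp (-(r * t)))
    (F' := fun (r : ℂ) (t : ℝ) => (t : ℂ) ^ (a - 1) * (cexp (-(r * t)) * (-t)))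
    (x₀ := r) (s := Metric.ball r (r.re / 2)) (bound := fun t => t ^ a.re * Real.exp (-(r.re / 2) * t))
    (Metric.ball_mem_nhds _ hε) ?_ ?_ ?_ ?_ ?_ ?_
  · exact this.2.differentiableAt
  · filter_upwards [Metric.ball_mem_nhds r hε] with z hz
    exact (intOn_cpow_mul_exp (a - 1) z (by simp; linarith) (by linarith [hball z hz])).1
  · exact intOn_cpow_mul_exp (a - 1) r (by simp; linarith) hr
  · refine ContinuousOn.aestronglyMeasurable ?_ measurableSet_Ioi
    exact (cont_cpow_Ioi _).mul (by fun_prop)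
  · refine (ae_restrict_iff' measurableSet_Ioi).2 (Eventually.of_forall fun t ht z hz => ?_)
    have ht' : 0 < t := ht
    rw [← mul_assoc, norm_mul, norm_cpow_mul_exp _ _ _ ht, norm_neg, Complex.norm_real, Real.norm_of_nonneg ht'.le]
    have : t ^ a.re = t ^ (a - 1).re * t := by
      rw [← Real.rpow_add_one ht'.ne']; simp
    rw [this, mul_right_comm]
    gcongr
    exact hball z hz
  · exact intOn_gamma _ _ (by linarith) hε
  · refine Eventually.of_forall fun t z hz => ?_
    apply HasDerivAt.const_mul
    have := ((hasDerivAt_id z).mul_const (t : ℂ)).neg.cexp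
    simpa using this

lemma laplace_cpow (a r : ℂ) (ha : 0 < a.re) (hr : 0 < r.re) :
    ∫ t in Ioi (0:ℝ), (t : ℂ) ^ (a - 1) * cexp (-(r * t)) = r ^ (-a) * Complex.Gamma a := by
  set U : Set ℂ := {z | 0 < z.re} with hU
  have hUo : IsOpen U := isOpen_lt continuous_const Complex.continuous_re
  have hUc : IsPreconnected U := (convex_halfSpace_re_gt 0).isPreconnected
  have h1 : AnalyticOnNhd ℂ (fun r : ℂ => ∫ t in Ioi (0:ℝ), (t : ℂ) ^ (a - 1) * cexp (-(r * t))) U :=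
    DifferentiableOn.analyticOnNhd (fun z hz => (laplace_diff a z ha hz).differentiableWithinAt) hUo
  have h2 : AnalyticOnNhd ℂ (fun r : ℂ => r ^ (-a) * Complex.Gamma a) U := by
    refine DifferentiableOn.analyticOnNhd (fun z hz => ?_) hUo
    refine DifferentiableAt.differentiableWithinAt ?_
    refine DifferentiableAt.mul_const ?_ _
    exact differentiableAt_id.cpow_const (Or.inl hz)
  have h3 : ∃ᶠ z in 𝓝[≠] (1 : ℂ), (∫ t in Ioi (0:ℝ), (t : ℂ) ^ (a - 1) * cexp (-(z * t))) = z ^ (-a) * Complex.Gamma a := by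
    have ht : Tendsto (fun n : ℕ => ((1 + 1 / ((n : ℝ) + 1) : ℝ) : ℂ)) atTop (𝓝[≠] 1) := by
      rw [tendsto_nhdsWithin_iff]
      constructor
      · have := (tendsto_one_div_add_atTop_nhds_zero_nat (𝕜 := ℝ)).const_add 1
        rw [add_zero] at this
        exact_mod_cast (Complex.continuous_ofReal.tendsto _).comp this
      · refine Eventually.of_forall fun n => ?_
        have : (1 + 1 / ((n : ℝ) + 1) : ℝ) ≠ 1 := by
          have : 0 < 1 / ((n : ℝ) + 1) := by positivity
          linarith
        simpa using (by exact_mod_cast this : ((1 + 1 / ((n : ℝ) + 1) : ℝ) : ℂ) ≠ 1)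
    refine ht.frequently (Eventually.frequently (Eventually.of_forall fun n => ?_))
    have hp : 0 < (1 + 1 / ((n : ℝ) + 1) : ℝ) := by positivity
    rw [Complex.integral_cpow_mul_exp_neg_mul_Ioi ha hp]
    congr 1
    rw [one_div, Complex.inv_cpow, Complex.cpow_neg]
    rw [Complex.arg_ofReal_of_nonneg hp.le]; exact Real.pi_pos.ne
  exact h1.eqOn_of_preconnected_of_frequently_eq h2 hUc (by simp [hU]) h3 hr

/-- vertical line -/
noncomputable def vln (σ w : ℝ) : ℂ := σ + (2 * Real.pi * w : ℝ) * I

@[simp] lemma vln_re (σ w : ℝ) : (vln σ w).re = σ := by simp [vln]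
@[simp] lemma vln_im (σ w : ℝ) : (vln σ w).im = 2 * Real.pi * w := by simp [vln]

lemma vln_cont (σ : ℝ) : Continuous (vln σ) := by unfold vln; fun_prop

lemma vln_norm_ge (σ w : ℝ) (hσ : 0 < σ) : σ ≤ ‖vln σ w‖ := by
  have := Complex.abs_re_le_norm (vln σ w)
  rw [vln_re] at this
  exact (le_abs_self σ).trans this

lemma vln_ne (σ w : ℝ) (hσ : 0 < σ) : vln σ w ≠ 0 := by
  intro h; have := vln_norm_ge σ w hσ; rw [h] at this; simp at this; linarith

lemma vln_int (σ : ℝ) (hσ : 0 < σ) : Integrable (fun w : ℝ => 1 / ‖vln σ w‖ ^ 2) := by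
  refine (integrable_inv_one_add_sq.const_mul (1 + 1 / σ ^ 2)).mono' ?_ ?_
  · refine Continuous.aestronglyMeasurable ?_
    refine continuous_const.div ((vln_cont σ).norm.pow 2) fun w => ?_
    have := vln_norm_ge σ w hσ
    have hpos : 0 < ‖vln σ w‖ := by linarith
    positivity
  · refine Eventually.of_forall fun w => ?_
    have h0 := vln_norm_ge σ w hσ
    have hpos : 0 < ‖vln σ w‖ := by linarith
    rw [Real.norm_of_nonneg (by positivity), ← div_eq_mul_inv, div_le_div_iff₀ (by positivity) (by positivity)]
    have e : ‖vln σ w‖ ^ 2 = σ ^ 2 + 4 * Real.pi ^ 2 * w ^ 2 := by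
      rw [← Complex.normSq_eq_norm_sq, Complex.normSq_apply, vln_re, vln_im]; ring
    rw [e]
    have e2 : (1 + 1 / σ ^ 2) * (σ ^ 2 + 4 * Real.pi ^ 2 * w ^ 2) = σ ^ 2 + 1 + 4 * Real.pi ^ 2 * w ^ 2 + 4 * Real.pi ^ 2 * w ^ 2 / σ ^ 2 := by
      field_simp; ring
    rw [e2]
    have h3 : 0 ≤ 4 * Real.pi ^ 2 * w ^ 2 / σ ^ 2 := by positivity
    have hpi : 1 ≤ 4 * Real.pi ^ 2 := by nlinarith [Real.pi_gt_three]
    nlinarith [sq_nonneg w, sq_nonneg σ]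

lemma norm_cpow_neg_le (s t : ℂ) (hs : s ≠ 0) :
    ‖s ^ (-t)‖ ≤ ‖s‖ ^ (-t.re) * Real.exp (Real.pi * |t.im|) := by
  rw [Complex.norm_cpow_of_ne_zero hs, div_eq_mul_inv, ← Real.exp_neg]
  simp only [Complex.neg_re, Complex.neg_im]
  gcongr
  have h1 := Complex.abs_arg_le_pi s
  calc -(s.arg * -t.im) = s.arg * t.im := by ring
    _ ≤ |s.arg * t.im| := le_abs_self _
    _ = |s.arg| * |t.im| := abs_mul _ _
    _ ≤ _ := by gcongr

lemma norm_cpow_neg_le' (s t : ℂ) (δ : ℝ) (hδ : 0 < δ) (hs : δ ≤ ‖s‖) (ht : 2 ≤ t.re) :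
    ‖s ^ (-t)‖ ≤ δ ^ (2 - t.re) * Real.exp (Real.pi * |t.im|) * (1 / ‖s‖ ^ 2) := by
  have hpos : 0 < ‖s‖ := by linarith
  refine (norm_cpow_neg_le s t (norm_pos_iff.1 hpos)).trans ?_
  have : ‖s‖ ^ (-t.re) = ‖s‖ ^ (2 - t.re) * (1 / ‖s‖ ^ 2) := by
    rw [show (2 - t.re) = -t.re + (2:ℕ) by push_cast; ring, Real.rpow_add_natCast hpos.ne']
    field_simp
  rw [this]
  have : ‖s‖ ^ (2 - t.re) ≤ δ ^ (2 - t.re) := Real.rpow_le_rpow_of_nonpos hδ hs (by linarith)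
  calc _ = ‖s‖ ^ (2 - t.re) * Real.exp (Real.pi * |t.im|) * (1 / ‖s‖ ^ 2) := by ring
    _ ≤ _ := by gcongr

lemma vln_cpow_cont (σ : ℝ) (hσ : 0 < σ) (t : ℂ) : Continuous (fun w => vln σ w ^ t) := by
  rw [continuous_iff_continuousAt]
  intro w
  exact (continuousAt_cpow_const (Or.inl (by simpa using hσ))).comp (vln_cont σ).continuousAt

lemma vln_cpow_int (σ : ℝ) (hσ : 0 < σ) (t : ℂ) (ht : 2 ≤ t.re) :
    Integrable (fun w => vln σ w ^ (-t)) := by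
  refine ((vln_int σ hσ).const_mul (σ ^ (2 - t.re) * Real.exp (Real.pi * |t.im|))).mono' ?_ ?_
  · exact (vln_cpow_cont σ hσ _).aestronglyMeasurable
  · exact Eventually.of_forall fun w => norm_cpow_neg_le' _ t σ hσ (vln_norm_ge σ w hσ) ht

lemma norm_exp_vln (σ w y : ℝ) : ‖cexp (vln σ w * y)‖ = Real.exp (σ * y) := by
  rw [Complex.norm_exp]; simp

lemma inv_laplace (σ y : ℝ) (hσ : 0 < σ) (hy : 0 < y) (t : ℂ) (ht : 2 ≤ t.re) :
    ∫ w : ℝ, cexp (vln σ w * y) * vln σ w ^ (-t) = (y : ℂ) ^ (t - 1) / Complex.Gamma t := by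
  have hG : Complex.Gamma t ≠ 0 := Complex.Gamma_ne_zero_of_re_pos (by linarith)
  set f : ℝ → ℂ := (Ioi (0:ℝ)).indicator (fun v : ℝ => (v : ℂ) ^ (t - 1) * cexp (-((σ:ℂ) * v))) with hf
  have hfi : Integrable f := by
    rw [hf, integrable_indicator_iff measurableSet_Ioi]
    exact intOn_cpow_mul_exp (t - 1) σ (by simp; linarith) (by simpa using hσ)
  have hF : 𝓕 f = fun w => vln σ w ^ (-t) * Complex.Gamma t := by
    ext w
    rw [Real.fourier_real_eq_integral_exp_smul, ← laplace_cpow t (vln σ w) (by linarith) (by simpa using hσ),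
      ← integral_indicator measurableSet_Ioi]
    congr 1
    ext v
    by_cases hv : v ∈ Ioi (0:ℝ)
    · rw [hf, indicator_of_mem hv, indicator_of_mem hv, smul_eq_mul, mul_left_comm, ← Complex.exp_add]
      congr 2
      rw [vln]; push_cast; ring
    · rw [hf, indicator_of_notMem hv, indicator_of_notMem hv, smul_zero]
  have hFi : Integrable (𝓕 f) := by
    rw [hF]; exact (vln_cpow_int σ hσ t ht).mul_const _
  have hc : ContinuousAt f y := by
    have h1 : ContinuousAt (fun v : ℝ => (v : ℂ) ^ (t - 1) * cexp (-((σ:ℂ) * v))) y :=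
      ((cont_cpow_Ioi _).continuousAt (Ioi_mem_nhds hy)).mul (by fun_prop)
    refine h1.congr ?_
    filter_upwards [Ioi_mem_nhds hy] with v hv
    rw [hf, indicator_of_mem hv]
  have key := hfi.fourierInv_fourier_eq hFi hc
  rw [Real.fourierInv_eq', hF, hf, indicator_of_mem (show y ∈ Ioi (0:ℝ) from hy)] at key
  have e : ∀ w : ℝ, cexp (vln σ w * y) * vln σ w ^ (-t) = (cexp (σ * y) / Complex.Gamma t) *
      (cexp (((2 * Real.pi * inner ℝ w y : ℝ) : ℂ) * I) • (vln σ w ^ (-t) * Complex.Gamma t)) := by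
    intro w
    have : cexp (vln σ w * y) = cexp (σ * y) * cexp (((2 * Real.pi * inner ℝ w y : ℝ) : ℂ) * I) := by
      rw [← Complex.exp_add]; congr 1; rw [vln]; simp; ring
    rw [this, smul_eq_mul]; field_simp
  simp_rw [e]
  rw [integral_const_mul, key, mul_comm _ (cexp _), ← mul_assoc, div_mul_eq_mul_div, ← Complex.exp_add]
  simp [div_eq_mul_inv, mul_comm]

/-- generating function -/
noncomputable def mlH (κ : ℝ) (c s : ℂ) : ℂ := s ^ (-c) / (1 - s ^ (-(κ:ℂ)))

lemma norm_cpow_real (s : ℂ) (hs : s ≠ 0) (κ : ℝ) : ‖s ^ (-(κ:ℂ))‖ = ‖s‖ ^ (-κ) := by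
  rw [Complex.norm_cpow_of_ne_zero hs]; simp

lemma ml_hasSum (κ : ℝ) (hκ : 0 < κ) (c : ℂ) (hc : 2 ≤ c.re) (y : ℝ) (hy : 0 < y) :
    Integrable (fun w => cexp (vln 2 w * y) * mlH κ c (vln 2 w)) ∧
    HasSum (fun n : ℕ => (y : ℂ) ^ ((κ:ℂ) * n + c - 1) / Complex.Gamma ((κ:ℂ) * n + c))
      (∫ w : ℝ, cexp (vln 2 w * y) * mlH κ c (vln 2 w)) := by
  set q : ℝ := 2 ^ (-κ) with hq
  have hq0 : 0 < q := by positivity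
  have hq1 : q < 1 := Real.rpow_lt_one_of_one_lt_of_neg (by norm_num) (by linarith)
  have hsq : ∀ w, ‖vln 2 w ^ (-(κ:ℂ))‖ ≤ q := by
    intro w
    rw [norm_cpow_real _ (vln_ne 2 w (by norm_num))]
    exact Real.rpow_le_rpow_of_nonpos (by norm_num) (vln_norm_ge 2 w (by norm_num)) (by linarith)
  have hterm : ∀ (n : ℕ) (w : ℝ), vln 2 w ^ (-((κ:ℂ) * n + c)) = vln 2 w ^ (-c) * (vln 2 w ^ (-(κ:ℂ))) ^ n := by
    intro n w
    rw [← Complex.cpow_nat_mul, ← Complex.cpow_add _ _ (vln_ne 2 w (by norm_num))]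
    congr 1; ring
  have hre : ∀ n : ℕ, 2 ≤ ((κ:ℂ) * n + c).re := by
    intro n
    have : 0 ≤ κ * n := by positivity
    simp; linarith
  have hint0 := vln_cpow_int 2 (by norm_num) c hc
  have hexpc : Continuous (fun w => cexp (vln 2 w * y)) := by
    have := vln_cont 2
    fun_prop
  set F : ℕ → ℝ → ℂ := fun n w => cexp (vln 2 w * y) * vln 2 w ^ (-((κ:ℂ) * n + c)) with hF
  have hFn : ∀ n w, ‖F n w‖ ≤ q ^ n * (Real.exp (2 * y) * ‖vln 2 w ^ (-c)‖) := by
    intro n w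
    rw [hF]; simp only
    rw [norm_mul, norm_exp_vln, hterm, norm_mul, norm_pow]
    have := hsq w
    calc _ ≤ Real.exp (2 * y) * (‖vln 2 w ^ (-c)‖ * q ^ n) := by gcongr
      _ = _ := by ring
  have hFint : ∀ n, Integrable (F n) := by
    intro n
    refine (((hint0.norm.const_mul (Real.exp (2 * y)))).const_mul (q ^ n)).mono' ?_ ?_
    · exact (hexpc.mul (vln_cpow_cont 2 (by norm_num) _)).aestronglyMeasurable
    · exact Eventually.of_forall fun w => hFn n w
  have hgeo : Summable (fun n : ℕ => q ^ n) := summable_geometric_of_lt_one hq0.le hq1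
  have hsum : Summable (fun n => ∫ w, ‖F n w‖) := by
    refine Summable.of_nonneg_of_le (fun n => integral_nonneg fun w => norm_nonneg _) (fun n => ?_)
      (hgeo.mul_right (∫ w, Real.exp (2 * y) * ‖vln 2 w ^ (-c)‖))
    rw [← integral_const_mul]
    exact integral_mono (hFint n).norm (((hint0.norm.const_mul (Real.exp (2 * y)))).const_mul (q ^ n)) (hFn n)
  have htsum : ∀ w, HasSum (fun n => F n w) (cexp (vln 2 w * y) * mlH κ c (vln 2 w)) := by
    intro w
    have := (hasSum_geometric_of_norm_lt_one ((hsq w).trans_lt hq1)).mul_left (cexp (vln 2 w * y) * vln 2 w ^ (-c))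
    have e1 : (fun n => F n w) = fun n : ℕ => cexp (vln 2 w * y) * vln 2 w ^ (-c) * (vln 2 w ^ (-(κ:ℂ))) ^ n := by
      funext n; simp only [hF, hterm]; ring
    have e2 : cexp (vln 2 w * y) * mlH κ c (vln 2 w) = cexp (vln 2 w * y) * vln 2 w ^ (-c) * (1 - vln 2 w ^ (-(κ:ℂ)))⁻¹ := by
      rw [mlH, div_eq_mul_inv, mul_assoc]
    rw [e1, e2]; exact this
  constructor
  · have hb : Integrable (fun w => (1 - q)⁻¹ * (Real.exp (2 * y) * ‖vln 2 w ^ (-c)‖)) :=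
      (hint0.norm.const_mul (Real.exp (2 * y))).const_mul _
    refine hb.mono' ?_ ?_
    · have : (fun w => cexp (vln 2 w * y) * mlH κ c (vln 2 w)) = fun w => cexp (vln 2 w * y) * (vln 2 w ^ (-c) / (1 - vln 2 w ^ (-(κ:ℂ)))) := rfl
      rw [this]
      refine Continuous.aestronglyMeasurable ?_
      refine hexpc.mul ((vln_cpow_cont 2 (by norm_num) _).div (continuous_const.sub (vln_cpow_cont 2 (by norm_num) _)) fun w h => ?_)
      have h2 := (hsq w).trans_lt hq1
      rw [← sub_eq_zero.1 h] at h2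
      simp at h2
    · refine Eventually.of_forall fun w => ?_
      rw [← (htsum w).tsum_eq]
      refine (tsum_of_norm_bounded ((hasSum_geometric_of_lt_one hq0.le hq1).mul_right _) (fun n => hFn n w))
  · have := hasSum_integral_of_summable_integral_norm hFint hsum
    have e : (fun w => ∑' n, F n w) = fun w => cexp (vln 2 w * y) * mlH κ c (vln 2 w) := by
      ext w; exact (htsum w).tsum_eq
    rw [e] at this
    have e2 : (fun n : ℕ => (y : ℂ) ^ ((κ:ℂ) * n + c - 1) / Complex.Gamma ((κ:ℂ) * n + c)) = fun n => ∫ w, F n w :=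
      funext fun n => (inv_laplace 2 y (by norm_num) hy _ (hre n)).symm
    rw [e2]; exact this

lemma vshift_int (σ : ℝ) (hσ : 0 < σ) (G : ℂ → ℂ) (C : ℝ)
    (hd : ∀ s : ℂ, s.re = σ → DifferentiableAt ℂ G s)
    (hb : ∀ s : ℂ, s.re = σ → ‖G s‖ ≤ C * (1 / ‖s‖ ^ 2)) :
    Integrable (fun w => G (vln σ w)) := by
  refine ((vln_int σ hσ).const_mul C).mono' ?_ ?_
  · refine Continuous.aestronglyMeasurable ?_
    rw [continuous_iff_continuousAt]
    intro w
    exact (hd _ (vln_re σ w)).continuousAt.comp (vln_cont σ).continuousAt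
  · exact Eventually.of_forall fun w => hb _ (vln_re σ w)

lemma vshift_horiz (σ1 σ2 : ℝ) (hσ12 : σ1 ≤ σ2) (G : ℂ → ℂ) (C : ℝ) (hC : 0 ≤ C)
    (hb : ∀ s : ℂ, σ1 ≤ s.re → s.re ≤ σ2 → ‖G s‖ ≤ C * (1 / ‖s‖ ^ 2)) (τ : ℝ) (hτ : τ ≠ 0) :
    ‖∫ x in σ1..σ2, G (x + τ * I)‖ ≤ C * (σ2 - σ1) * (1 / τ ^ 2) := by
  have := intervalIntegral.norm_integral_le_of_norm_le_const (a := σ1) (b := σ2) (f := fun x : ℝ => G (x + τ * I)) (C := C * (1 / τ ^ 2)) ?_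
  · rw [abs_of_nonneg (by linarith)] at this
    linarith
  · intro x hx
    rw [uIoc_of_le hσ12] at hx
    refine (hb _ (by simpa using hx.1.le) (by simpa using hx.2)).trans ?_
    have h1 : τ ^ 2 ≤ ‖(x:ℂ) + τ * I‖ ^ 2 := by
      rw [← Complex.normSq_eq_norm_sq, Complex.normSq_apply]
      simp; nlinarith [sq_nonneg x]
    have : 0 < τ ^ 2 := by positivity
    gcongr

lemma vshift (σ1 σ2 : ℝ) (hσ1 : 0 < σ1) (hσ12 : σ1 ≤ σ2) (G : ℂ → ℂ) (C : ℝ) (hC : 0 ≤ C)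
    (hd : ∀ s : ℂ, σ1 ≤ s.re → DifferentiableAt ℂ G s)
    (hb : ∀ s : ℂ, σ1 ≤ s.re → s.re ≤ σ2 → ‖G s‖ ≤ C * (1 / ‖s‖ ^ 2)) :
    ∫ w, G (vln σ1 w) = ∫ w, G (vln σ2 w) := by
  have i1 := vshift_int σ1 hσ1 G C (fun s hs => hd s hs.ge) (fun s hs => hb s hs.ge (hs.le.trans hσ12))
  have i2 := vshift_int σ2 (hσ1.trans_le hσ12) G C (fun s hs => hd s (hσ12.trans hs.ge)) (fun s hs => hb s (hσ12.trans hs.ge) hs.le)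
  have t1 := intervalIntegral_tendsto_integral i1 (tendsto_neg_atTop_atBot) (tendsto_id (α := ℝ))
  have t2 := intervalIntegral_tendsto_integral i2 (tendsto_neg_atTop_atBot) (tendsto_id (α := ℝ))
  have key : ∀ T : ℝ, 0 < T → ‖(∫ w in (-T)..T, G (vln σ1 w)) - ∫ w in (-T)..T, G (vln σ2 w)‖ ≤
      2 * (C * (σ2 - σ1)) * (1 / (2 * Real.pi * T) ^ 2) := by
    intro T hT
    have hτ : (2 * Real.pi * T) ≠ 0 := by positivity
    have hrect := Complex.integral_boundary_rect_eq_zero_of_differentiableOn G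
      (σ1 + (-(2 * Real.pi * T) : ℝ) * I) (σ2 + (2 * Real.pi * T : ℝ) * I) ?_
    · have hv : ∀ σ : ℝ, ∫ y in (-(2 * Real.pi * T))..(2 * Real.pi * T), G (σ + y * I) = (2 * Real.pi) * ∫ w in (-T)..T, G (vln σ w) := by
        intro σ
        have := intervalIntegral.smul_integral_comp_mul_left (a := -T) (b := T) (fun y : ℝ => G (σ + y * I)) (2 * Real.pi)
        rw [show 2 * Real.pi * -T = -(2 * Real.pi * T) by ring] at this
        rw [← this, Complex.real_smul]
        simp only [vln]
        push_cast
        rfl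
      simp only [add_re, ofReal_re, mul_re, I_re, mul_zero, ofReal_im, I_im, mul_one, sub_self, add_zero, add_im, mul_im, zero_add] at hrect
      rw [hv, hv] at hrect
      have b1 := vshift_horiz σ1 σ2 hσ12 G C hC hb (2 * Real.pi * T) hτ
      have b2 := vshift_horiz σ1 σ2 hσ12 G C hC hb (-(2 * Real.pi * T)) (neg_ne_zero.2 hτ)
      rw [neg_sq] at b2
      set H1 := ∫ x in σ1..σ2, G (x + (2 * Real.pi * T : ℝ) * I)
      set H2 := ∫ x in σ1..σ2, G (x + (-(2 * Real.pi * T) : ℝ) * I)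
      set V1 := ∫ w in (-T)..T, G (vln σ1 w)
      set V2 := ∫ w in (-T)..T, G (vln σ2 w)
      have e : I * (2 * Real.pi) * (V1 - V2) = H2 - H1 := by
        simp only [smul_eq_mul] at hrect
        linear_combination -hrect
      have e2 : (2 * Real.pi) * ‖V1 - V2‖ = ‖H2 - H1‖ := by
        rw [← e, norm_mul, norm_mul, norm_mul]; simp [abs_of_pos Real.pi_pos]
      have e3 := norm_sub_le H2 H1
      have : ‖V1 - V2‖ ≤ (2 * Real.pi) * ‖V1 - V2‖ := by
        nlinarith [Real.pi_gt_three, norm_nonneg (V1 - V2)]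
      linarith
    · intro s hs
      refine (hd s ?_).differentiableWithinAt
      rw [mem_reProdIm] at hs
      have := hs.1
      simp [uIcc_of_le hσ12] at this
      exact this.1
  have t3 : Tendsto (fun T : ℝ => (∫ w in (-T)..T, G (vln σ1 w)) - ∫ w in (-T)..T, G (vln σ2 w)) atTop (𝓝 0) := by
    refine squeeze_zero_norm' (a := fun T => 2 * (C * (σ2 - σ1)) * (1 / (2 * Real.pi * T) ^ 2)) ?_ ?_
    · filter_upwards [eventually_gt_atTop 0] with T hT using key T hT
    · rw [show (0:ℝ) = 2 * (C * (σ2 - σ1)) * 0 by ring]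
      refine Tendsto.const_mul _ ?_
      refine Tendsto.const_div_atTop ?_ 1
      refine (tendsto_pow_atTop (by norm_num)).comp ?_
      exact tendsto_id.const_mul_atTop (by positivity)
  exact sub_eq_zero.1 (tendsto_nhds_unique (t1.sub t2) t3)

lemma ml_zero_free (κ : ℝ) (hκ : 0 < κ) : ∃ ε : ℝ, 0 < ε ∧ ε ≤ 1 / 2 ∧
    ∀ s : ℂ, 1 - 2 * ε < s.re → s ^ (-(κ:ℂ)) = 1 → s = 1 := by
  set φ := min (2 * Real.pi / κ) Real.pi with hφ
  have hφ0 : 0 < φ := lt_min (by positivity) Real.pi_pos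
  have hφπ : φ ≤ Real.pi := min_le_right _ _
  have hm : Real.cos φ < 1 := by
    have := Real.cos_lt_cos_of_nonneg_of_le_pi le_rfl hφπ hφ0
    simpa using this
  refine ⟨min ((1 - Real.cos φ) / 2) (1 / 2), lt_min (by linarith) (by norm_num), min_le_right _ _, ?_⟩
  intro s hs h1
  have hs1 : Real.cos φ < s.re := by
    have := min_le_left ((1 - Real.cos φ) / 2) (1 / 2)
    linarith
  have hs2 : 0 < s.re := by
    have := min_le_right ((1 - Real.cos φ) / 2) (1 / 2)
    linarith
  have hs0 : s ≠ 0 := by rintro rfl; simp at hs2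
  have hn : ‖s‖ = 1 := by
    have h2 := congrArg norm h1
    rw [norm_cpow_real s hs0, norm_one] at h2
    have hp : 0 < ‖s‖ := norm_pos_iff.2 hs0
    have h3 := congrArg Real.log h2
    rw [Real.log_rpow hp, Real.log_one] at h3
    rcases mul_eq_zero.1 h3 with h | h
    · linarith
    · exact Real.eq_one_of_pos_of_log_eq_zero hp h
  rw [Complex.cpow_def_of_ne_zero hs0, Complex.exp_eq_one_iff] at h1
  obtain ⟨n, hn1⟩ := h1
  have him := congrArg Complex.im hn1
  simp [Complex.log_im] at him
  have hre : s.re = Real.cos |s.arg| := by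
    rw [Real.cos_abs, Complex.cos_arg hs0, hn, div_one]
  by_cases h0 : n = 0
  · subst h0
    simp at him
    rcases him with h | h
    · have h2 := Complex.norm_mul_exp_arg_mul_I s
      rw [hn, h] at h2
      simpa using h2.symm
    · linarith
  · exfalso
    have h1n : (1:ℝ) ≤ |(n:ℝ)| := by
      have : 1 ≤ |n| := Int.one_le_abs h0
      exact_mod_cast this
    have h2 : |s.arg| * κ = |(n:ℝ)| * (2 * Real.pi) := by
      have := congrArg abs him
      rw [abs_neg, abs_mul, abs_mul, abs_of_pos hκ, abs_of_pos (by positivity : 0 < 2 * Real.pi)] at this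
      exact this
    have h3 : 2 * Real.pi / κ ≤ |s.arg| := by
      rw [div_le_iff₀ hκ, h2]
      nlinarith [Real.pi_pos]
    have h4 := Real.cos_le_cos_of_nonneg_of_le_pi hφ0.le (Complex.abs_arg_le_pi s) ((min_le_left _ _).trans h3)
    linarith

lemma mlH_bound (κ : ℝ) (c s : ℂ) (hc : 2 ≤ c.re) (hs : 1 ≤ ‖s‖) (hs2 : ‖s‖ ^ (-κ) ≤ 1 / 2) :
    ‖mlH κ c s‖ ≤ 2 * Real.exp (Real.pi * |c.im|) * (1 / ‖s‖ ^ 2) := by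
  have hs0 : s ≠ 0 := norm_pos_iff.1 (by linarith)
  have h1 := norm_cpow_neg_le' s c 1 one_pos hs hc
  rw [Real.one_rpow, one_mul] at h1
  have h2 : 1 / 2 ≤ ‖1 - s ^ (-(κ:ℂ))‖ := by
    have := norm_sub_norm_le 1 (s ^ (-(κ:ℂ)))
    rw [norm_one, norm_cpow_real s hs0] at this
    linarith
  rw [mlH, norm_div, div_le_iff₀ (by linarith)]
  calc _ ≤ Real.exp (Real.pi * |c.im|) * (1 / ‖s‖ ^ 2) := h1
    _ = 2 * Real.exp (Real.pi * |c.im|) * (1 / ‖s‖ ^ 2) * (1 / 2) := by ring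
    _ ≤ _ := by gcongr

lemma ml_G0 (κ : ℝ) (hκ : 0 < κ) (c : ℂ) (hc : 2 ≤ c.re) : ∃ (ε C : ℝ) (G : ℂ → ℂ),
    0 < ε ∧ ε ≤ 1 / 2 ∧ 0 ≤ C ∧ (∀ s : ℂ, 1 - ε ≤ s.re → DifferentiableAt ℂ G s) ∧
    (∀ s : ℂ, 1 - ε ≤ s.re → ‖G s‖ ≤ C * (1 / ‖s‖ ^ 2)) ∧
    ∀ s : ℂ, s ≠ 1 → s ≠ 0 → G s = mlH κ c s - (1 / (κ:ℂ)) * mlH 1 2 s := by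
  obtain ⟨ε, hε0, hε1, hz⟩ := ml_zero_free κ hκ
  set Ω : Set ℂ := {s : ℂ | 1 - 2 * ε < s.re} with hΩ
  have hΩo : IsOpen Ω := isOpen_lt continuous_const Complex.continuous_re
  have h1Ω : (1:ℂ) ∈ Ω := by simp [hΩ]; linarith
  have hΩ1 : Ω ∈ 𝓝 (1:ℂ) := hΩo.mem_nhds h1Ω
  have hpos : ∀ s ∈ Ω, 0 < s.re := fun s hs => by
    have : 1 - 2 * ε < s.re := hs
    linarith
  have hne : ∀ s ∈ Ω, s ≠ 0 := fun s hs h => by have := hpos s hs; rw [h] at this; simp at this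
  have hκc : (κ:ℂ) ≠ 0 := by exact_mod_cast hκ.ne'
  have hcp : ∀ t : ℂ, ∀ s ∈ Ω, HasDerivAt (fun s : ℂ => s ^ t) (t * s ^ (t - 1)) s := by
    intro t s hs
    have := (hasDerivAt_id s).cpow_const (c := t) (Or.inl (hpos s hs))
    simpa using this
  set d : ℂ → ℂ := fun s => 1 - s ^ (-(κ:ℂ)) with hd
  have hdd : ∀ s ∈ Ω, HasDerivAt d (-(-(κ:ℂ) * s ^ (-(κ:ℂ) - 1))) s := fun s hs => (hcp _ s hs).const_sub 1
  have hd1 : deriv d 1 = κ := by rw [(hdd 1 h1Ω).deriv]; simp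
  have hdv : d 1 = 0 := by simp [hd]
  set D := dslope d 1 with hD
  have hDd : DifferentiableOn ℂ D Ω := (Complex.differentiableOn_dslope hΩ1).2
    (fun s hs => (hdd s hs).differentiableAt.differentiableWithinAt)
  have hDne : ∀ s, s ≠ 1 → D s = (s - 1)⁻¹ * d s := by
    intro s hs; rw [hD, dslope_of_ne _ hs, slope_def_field, hdv]; field_simp; ring
  have hD1 : D 1 = κ := by rw [hD, dslope_same, hd1]
  have hDz : ∀ s ∈ Ω, D s ≠ 0 := by
    intro s hs
    by_cases h : s = 1
    · rw [h, hD1]; exact hκc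
    · rw [hDne s h]
      refine mul_ne_zero (inv_ne_zero (sub_ne_zero.2 h)) fun h2 => h (hz s hs ?_)
      exact (sub_eq_zero.1 h2).symm
  set M : ℂ → ℂ := fun s => s ^ (-c) / D s - 1 / (κ * s) with hM
  have hMd : DifferentiableOn ℂ M Ω := by
    refine DifferentiableOn.sub (DifferentiableOn.div (fun s hs => (hcp _ s hs).differentiableAt.differentiableWithinAt) hDd hDz) ?_
    refine DifferentiableOn.div (by fun_prop) (by fun_prop) fun s hs => mul_ne_zero hκc (hne s hs)
  have hM1 : M 1 = 0 := by simp [hM, hD1]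
  set G := dslope M 1 with hG
  have hGd : DifferentiableOn ℂ G Ω := (Complex.differentiableOn_dslope hΩ1).2 hMd
  have hGe : ∀ s : ℂ, s ≠ 1 → s ≠ 0 → G s = mlH κ c s - (1 / (κ:ℂ)) * mlH 1 2 s := by
    intro s hs hs0
    have h1 : s - 1 ≠ 0 := sub_ne_zero.2 hs
    have e2 : mlH 1 2 s = 1 / (s * (s - 1)) := by
      rw [mlH]; simp only [ofReal_one]
      rw [Complex.cpow_neg, Complex.cpow_neg_one, Complex.cpow_ofNat]
      have : 1 - s⁻¹ ≠ 0 := by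
        intro h; apply h1; field_simp at h; simpa using h
      field_simp
    have e3 : M s = (s - 1) * mlH κ c s - 1 / (κ * s) := by
      rw [hM]; simp only [hDne s hs, mlH, hd]
      rw [div_eq_mul_inv, mul_inv, inv_inv]; ring
    rw [hG, dslope_of_ne _ hs, slope_def_field, hM1, e2, e3]
    field_simp; ring
  have hsubset : ∀ s : ℂ, 1 - ε ≤ s.re → s ∈ Ω := fun s hs => by
    show 1 - 2 * ε < s.re
    linarith
  obtain ⟨R, hR2, hRκ⟩ : ∃ R : ℝ, 2 ≤ R ∧ R ^ (-κ) ≤ 1 / 2 := by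
    have h1 := (tendsto_rpow_neg_atTop hκ).eventually (ge_mem_nhds (show (0:ℝ) < 1 / 2 by norm_num))
    obtain ⟨R, h⟩ := (h1.and (eventually_ge_atTop 2)).exists
    exact ⟨R, h.2, h.1⟩
  have hKc : IsCompact (Metric.closedBall (0:ℂ) R ∩ {s : ℂ | 1 - ε ≤ s.re}) :=
    (isCompact_closedBall 0 R).inter_right (isClosed_le continuous_const Complex.continuous_re)
  obtain ⟨C0, hC0⟩ := hKc.exists_bound_of_continuousOn (hGd.continuousOn.mono (fun s hs => hsubset s hs.2))
  set C1 := 2 * Real.exp (Real.pi * |c.im|) + (1 / κ) * 2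
  have hC1 : 0 ≤ C1 := by positivity
  refine ⟨ε, |C0| * R ^ 2 + C1, G, hε0, hε1, by positivity, fun s hs => hGd.differentiableAt (hΩo.mem_nhds (hsubset s hs)), ?_, hGe⟩
  intro s hs
  have hs0 := hne s (hsubset s hs)
  have hsn : 0 < ‖s‖ := norm_pos_iff.2 hs0
  by_cases hsR : ‖s‖ ≤ R
  · have h1 := hC0 s ⟨by simpa using hsR, hs⟩
    calc ‖G s‖ ≤ |C0| := h1.trans (le_abs_self _)
      _ = |C0| * ‖s‖ ^ 2 * (1 / ‖s‖ ^ 2) := by field_simp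
      _ ≤ (|C0| * R ^ 2 + C1) * (1 / ‖s‖ ^ 2) := by
        gcongr
        have : |C0| * ‖s‖ ^ 2 ≤ |C0| * R ^ 2 := by gcongr
        linarith
  · push Not at hsR
    have hs1 : s ≠ 1 := by rintro rfl; simp at hsR; linarith
    rw [hGe s hs1 hs0]
    have b1 := mlH_bound κ c s hc (by linarith) ((Real.rpow_le_rpow_of_nonpos (by linarith) hsR.le (by linarith)).trans hRκ)
    have b2 := mlH_bound 1 2 s (by simp) (by linarith) (by
      rw [Real.rpow_neg_one, one_div]; gcongr; linarith)
    simp at b2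
    calc _ ≤ ‖mlH κ c s‖ + ‖(1 / (κ:ℂ)) * mlH 1 2 s‖ := norm_sub_le _ _
      _ = ‖mlH κ c s‖ + (1 / κ) * ‖mlH 1 2 s‖ := by rw [norm_mul]; simp [abs_of_pos hκ]
      _ ≤ 2 * Real.exp (Real.pi * |c.im|) * (1 / ‖s‖ ^ 2) + (1 / κ) * (2 * (1 / ‖s‖ ^ 2)) := by
        gcongr; simpa using b2
      _ = C1 * (1 / ‖s‖ ^ 2) := by ring
      _ ≤ _ := by
        gcongr
        have : 0 ≤ |C0| * R ^ 2 := by positivity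
        linarith

lemma ml_one_two (y : ℝ) : HasSum (fun n : ℕ => (y : ℂ) ^ (((1:ℝ):ℂ) * n + 2 - 1) / Complex.Gamma (((1:ℝ):ℂ) * n + 2))
    (cexp y - 1) := by
  have h := NormedSpace.expSeries_div_hasSum_exp (y:ℂ)
  rw [← Complex.exp_eq_exp_ℂ] at h
  have h2 := (hasSum_nat_add_iff' 1).2 h
  simp only [Finset.range_one, Finset.sum_singleton, pow_zero, Nat.factorial_zero, Nat.cast_one, div_one] at h2
  have e : (fun n : ℕ => (y : ℂ) ^ (((1:ℝ):ℂ) * n + 2 - 1) / Complex.Gamma (((1:ℝ):ℂ) * n + 2)) =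
      fun n : ℕ => (y:ℂ) ^ (n + 1) / ((n + 1).factorial : ℂ) := by
    funext n
    rw [← Complex.Gamma_nat_eq_factorial, ← Complex.cpow_natCast]
    push_cast
    congr 2 <;> ring
  rw [e]; exact h2

lemma ml_asymp (κ : ℝ) (hκ : 0 < κ) (c : ℂ) (hc : 2 ≤ c.re) : ∃ ε C : ℝ, 0 < ε ∧ 0 ≤ C ∧
    ∀ y : ℝ, 0 < y → ∃ S : ℂ,
      HasSum (fun n : ℕ => (y : ℂ) ^ ((κ:ℂ) * n + c - 1) / Complex.Gamma ((κ:ℂ) * n + c)) S ∧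
      ‖S - cexp y / κ‖ ≤ C * Real.exp ((1 - ε) * y) := by
  obtain ⟨ε, C, G, hε0, hε1, hC, hGd, hGb, hGe⟩ := ml_G0 κ hκ c hc
  set J := ∫ w, 1 / ‖vln (1 - ε) w‖ ^ 2 with hJ
  have hJ0 : 0 ≤ J := integral_nonneg fun w => by positivity
  have hκc : (κ:ℂ) ≠ 0 := by exact_mod_cast hκ.ne'
  refine ⟨ε, C * J + 1 / κ, hε0, by positivity, fun y hy => ?_⟩
  obtain ⟨i1, s1⟩ := ml_hasSum κ hκ c hc y hy
  obtain ⟨i2, s2⟩ := ml_hasSum 1 one_pos 2 (by simp) y hy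
  refine ⟨_, s1, ?_⟩
  have e2 := s2.unique (ml_one_two y)
  set S1 := ∫ w : ℝ, cexp (vln 2 w * y) * mlH κ c (vln 2 w)
  have e3 : ∫ w : ℝ, cexp (vln 2 w * y) * G (vln 2 w) = S1 - (1 / (κ:ℂ)) * (cexp y - 1) := by
    rw [← e2, ← integral_const_mul, ← integral_sub i1 (i2.const_mul _)]
    congr 1; funext w
    rw [hGe (vln 2 w) (fun h => by have := congrArg Complex.re h; simp at this) (vln_ne 2 w (by norm_num))]
    ring
  have e4 := vshift (1 - ε) 2 (by linarith) (by linarith) (fun s => cexp (s * y) * G s) (Real.exp (2 * y) * C)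
    (by positivity) (fun s hs => (by fun_prop : DifferentiableAt ℂ (fun s : ℂ => cexp (s * y)) s).mul (hGd s hs)) (by
      intro s hs hs2
      rw [norm_mul, Complex.norm_exp]
      have h1 := hGb s hs
      calc _ ≤ Real.exp (2 * y) * (C * (1 / ‖s‖ ^ 2)) := by
            gcongr
            simp; gcongr
        _ = _ := by ring)
  have b : ‖∫ w : ℝ, cexp (vln (1 - ε) w * y) * G (vln (1 - ε) w)‖ ≤ C * J * Real.exp ((1 - ε) * y) := by
    have h1 : C * J * Real.exp ((1 - ε) * y) = ∫ w, Real.exp ((1 - ε) * y) * C * (1 / ‖vln (1 - ε) w‖ ^ 2) := by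
      rw [integral_const_mul]; ring
    rw [h1]
    refine norm_integral_le_of_norm_le ((vln_int _ (by linarith)).const_mul _) (Eventually.of_forall fun w => ?_)
    rw [norm_mul, norm_exp_vln, mul_assoc]
    gcongr
    exact hGb _ (by simp)
  have e5 : S1 - cexp y / κ = (∫ w : ℝ, cexp (vln (1 - ε) w * y) * G (vln (1 - ε) w)) - 1 / (κ:ℂ) := by
    rw [e4, e3]; field_simp; ring
  rw [e5]
  refine (norm_sub_le _ _).trans ?_
  have h1 : ‖1 / (κ:ℂ)‖ = 1 / κ := by simp [abs_of_pos hκ]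
  have h2 : 1 ≤ Real.exp ((1 - ε) * y) := Real.one_le_exp (by nlinarith)
  rw [h1]
  have : 1 / κ ≤ 1 / κ * Real.exp ((1 - ε) * y) := le_mul_of_one_le_right (by positivity) h2
  linarith

/-- two-term expansion predicate -/
def E1 (f : ℝ → ℂ) (p : ℂ) : Prop :=
  (fun x : ℝ => f x - (1 + p / x)) =O[atTop] fun x : ℝ => (x ^ 2)⁻¹

lemma inv_isBigO_one : (fun x : ℝ => ((x:ℂ))⁻¹) =O[atTop] fun _ : ℝ => (1:ℝ) := by
  refine IsBigO.of_bound 1 ?_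
  filter_upwards [eventually_ge_atTop 1] with x hx
  rw [norm_inv, Complex.norm_real, Real.norm_of_nonneg (by linarith)]
  simpa using inv_le_one_of_one_le₀ hx

lemma invsq_isBigO_one : (fun x : ℝ => (x ^ 2)⁻¹) =O[atTop] fun _ : ℝ => (1:ℝ) := by
  refine IsBigO.of_bound 1 ?_
  filter_upwards [eventually_ge_atTop 1] with x hx
  rw [Real.norm_of_nonneg (by positivity)]
  simpa using inv_le_one_of_one_le₀ (one_le_pow₀ hx)

lemma sq_inv_isBigO (p : ℂ) : (fun x : ℝ => p / (x:ℂ) ^ 2) =O[atTop] fun x : ℝ => (x ^ 2)⁻¹ := by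
  refine IsBigO.of_bound ‖p‖ (Eventually.of_forall fun x => ?_)
  simp [div_eq_mul_inv]

lemma E1.bdd {f : ℝ → ℂ} {p : ℂ} (hf : E1 f p) : f =O[atTop] fun _ : ℝ => (1:ℝ) := by
  have h1 := (IsBigO.trans hf invsq_isBigO_one).add
    ((isBigO_const_const (1:ℂ) one_ne_zero atTop).add (inv_isBigO_one.const_mul_left p))
  refine h1.congr_left fun x => ?_
  simp [div_eq_mul_inv]

lemma E1.one_add_bdd (p : ℂ) : (fun x : ℝ => 1 + p / (x:ℂ)) =O[atTop] fun _ : ℝ => (1:ℝ) :=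
  ((isBigO_const_const (1:ℂ) one_ne_zero atTop).add (inv_isBigO_one.const_mul_left p)).congr_left
    fun x => by simp [div_eq_mul_inv]

lemma E1.tendsto {f : ℝ → ℂ} {p : ℂ} (hf : E1 f p) : Tendsto f atTop (𝓝 1) := by
  have h0 : Tendsto (fun x : ℝ => (x ^ 2)⁻¹) atTop (𝓝 0) :=
    tendsto_inv_atTop_zero.comp (tendsto_pow_atTop (by norm_num))
  have h1 := IsBigO.trans_tendsto hf h0
  have h2 : Tendsto (fun x : ℝ => ((x:ℂ))⁻¹) atTop (𝓝 0) := by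
    have := (Complex.continuous_ofReal.tendsto 0).comp tendsto_inv_atTop_zero
    simpa [Function.comp_def] using this
  have h3 := h1.add ((h2.const_mul p).const_add 1)
  simp only [mul_zero, add_zero, zero_add] at h3
  refine h3.congr fun x => ?_
  rw [div_eq_mul_inv]; ring

lemma E1.ne {f : ℝ → ℂ} {p : ℂ} (hf : E1 f p) : ∀ᶠ x in atTop, f x ≠ 0 :=
  hf.tendsto.eventually_ne one_ne_zero

lemma E1.mul {f g : ℝ → ℂ} {p q : ℂ} (hf : E1 f p) (hg : E1 g q) : E1 (fun x => f x * g x) (p + q) := by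
  have h1 : (fun x : ℝ => (f x - (1 + p / x)) * g x) =O[atTop] fun x : ℝ => (x ^ 2)⁻¹ * 1 := IsBigO.mul hf hg.bdd
  have h2 : (fun x : ℝ => (1 + p / x) * (g x - (1 + q / x))) =O[atTop] fun x : ℝ => 1 * (x ^ 2)⁻¹ :=
    IsBigO.mul (E1.one_add_bdd p) hg
  simp only [mul_one, one_mul] at h1 h2
  refine ((h1.add h2).add (sq_inv_isBigO (p * q))).congr_left fun x => ?_
  simp only [div_eq_mul_inv]; ring

lemma E1.inv {f : ℝ → ℂ} {p : ℂ} (hf : E1 f p) : E1 (fun x => (f x)⁻¹) (-p) := by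
  have hb : (fun x => (f x)⁻¹) =O[atTop] fun _ : ℝ => (1:ℝ) :=
    (hf.tendsto.inv₀ one_ne_zero).isBigO_one ℝ
  have h1 : (fun x : ℝ => (1 - p / x) * (f x - (1 + p / x))) =O[atTop] fun x : ℝ => 1 * (x ^ 2)⁻¹ :=
    IsBigO.mul ((E1.one_add_bdd (-p)).congr_left fun x => by ring) hf
  simp only [one_mul] at h1
  have h2 : (fun x : ℝ => (f x)⁻¹ * (p ^ 2 / (x:ℂ) ^ 2 - (1 - p / x) * (f x - (1 + p / x)))) =O[atTop] fun x : ℝ => 1 * (x ^ 2)⁻¹ :=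
    IsBigO.mul hb ((sq_inv_isBigO (p ^ 2)).sub h1)
  simp only [one_mul] at h2
  refine h2.congr' ?_ EventuallyEq.rfl
  filter_upwards [hf.ne] with x hx
  simp only [div_eq_mul_inv]
  have : (f x)⁻¹ * f x = 1 := inv_mul_cancel₀ hx
  linear_combination (-(1 - p * (x:ℂ)⁻¹)) * this

lemma E1.comp_mul {f : ℝ → ℂ} {p : ℂ} (hf : E1 f p) (α : ℝ) (hα : 0 < α) :
    E1 (fun x => f (α * x)) (p / α) := by
  have h1 := IsBigO.comp_tendsto hf (tendsto_id.const_mul_atTop hα)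
  have h2 : ((fun x : ℝ => (x ^ 2)⁻¹) ∘ fun x => α * id x) =O[atTop] fun x : ℝ => (x ^ 2)⁻¹ := by
    refine IsBigO.of_bound (α ^ 2)⁻¹ (Eventually.of_forall fun x => ?_)
    simp [mul_pow, mul_comm]
  have h3 := h1.trans h2
  refine h3.congr_left fun x => ?_
  simp [div_div]

lemma E1.sub {f g : ℝ → ℂ} {p : ℂ} (hf : E1 f p) (hg : E1 g p) :
    (fun x => f x - g x) =O[atTop] fun x : ℝ => (x ^ 2)⁻¹ := by
  refine (IsBigO.sub hf hg).congr_left fun x => ?_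
  ring

lemma E1_frac (κ : ℝ) (hκ : 0 < κ) (c d : ℂ) : E1 (fun x => 1 + κ * d / (κ * x + c)) d := by
  have h1 : Tendsto (fun x : ℝ => 1 + c / κ * ((x:ℂ))⁻¹) atTop (𝓝 1) := by
    have h2 : Tendsto (fun x : ℝ => ((x:ℂ))⁻¹) atTop (𝓝 0) := by
      have := (Complex.continuous_ofReal.tendsto 0).comp tendsto_inv_atTop_zero
      simpa [Function.comp_def] using this
    have := (h2.const_mul (c / κ)).const_add 1
    simpa using this
  have hb := (h1.inv₀ one_ne_zero).isBigO_one ℝ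
  have h3 := IsBigO.mul hb (sq_inv_isBigO (-(d * c / κ)))
  simp only [one_mul] at h3
  refine h3.congr' ?_ EventuallyEq.rfl
  filter_upwards [h1.eventually_ne one_ne_zero, eventually_gt_atTop 0] with x hx hx0
  have hκc : (κ:ℂ) ≠ 0 := by exact_mod_cast hκ.ne'
  have hxc : (x:ℂ) ≠ 0 := by exact_mod_cast hx0.ne'
  have e : (κ:ℂ) * x + c = κ * x * (1 + c / κ * ((x:ℂ))⁻¹) := by field_simp
  rw [e]
  set u := 1 + c / κ * ((x:ℂ))⁻¹ with hu
  have hcu : c = (u - 1) * κ * x := by rw [hu]; field_simp; ring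
  rw [hcu]
  field_simp
  ring

lemma gamma_of_stS (a : ℂ) (x : ℝ) :
    Complex.Gamma (x + a) = ((√(2 * Real.pi) : ℝ) : ℂ) * stS a x * cexp ((x + a - 1 / 2) * (Real.log x : ℝ) - x) := by
  have h0 : ((√(2 * Real.pi) : ℝ) : ℂ) ≠ 0 := by
    have : 0 < √(2 * Real.pi) := by positivity
    exact_mod_cast this.ne'
  rw [stS, mul_div_cancel₀ _ h0, mul_assoc, ← Complex.exp_add]
  simp

/-- normalised ratio -/
noncomputable def stR (α β κ : ℝ) (a b c : ℂ) (x : ℝ) : ℂ :=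
  stS a (α * x) * stS c (κ * x) * (stS b (β * x) * stS 1 (1 * x))⁻¹

lemma stS_E1 (a : ℂ) : E1 (stS a) (stP a) := stS_asymp a

lemma E1_stR (α β κ : ℝ) (hα : 0 < α) (hβ : 0 < β) (hκ : 0 < κ) (a b c : ℂ) :
    E1 (stR α β κ a b c) (stP a / α + stP c / κ + -(stP b / β + stP 1 / (1:ℝ))) :=
  (((stS_E1 a).comp_mul α hα).mul ((stS_E1 c).comp_mul κ hκ)).mul
    (((stS_E1 b).comp_mul β hβ).mul ((stS_E1 1).comp_mul 1 one_pos)).inv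

lemma coef_eq (α β κ : ℝ) (hα : 0 < α) (hβ : 0 < β) (hκ : 0 < κ) (hκe : κ = 1 + β - α) (a b c : ℂ)
    (hc : c = 1 - (a - b)) (n : ℕ) (hn : 0 < n) (hSc : stS c (κ * n) ≠ 0) :
    Complex.Gamma ((α:ℂ) * n + a) / Complex.Gamma ((β:ℂ) * n + b) / n.factorial =
      ((α:ℂ) ^ (a - 1 / 2) * (β:ℂ) ^ (1 / 2 - b) * (κ:ℂ) ^ (c - 1 / 2)) *
      ((α ^ α * β ^ (-β) * κ ^ κ : ℝ) : ℂ) ^ n * (stR α β κ a b c n / Complex.Gamma ((κ:ℂ) * n + c)) := by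
  have hnr : (0:ℝ) < n := by exact_mod_cast hn
  have hg : ∀ (γ : ℝ) (t : ℂ), Complex.Gamma ((γ:ℂ) * n + t) = Complex.Gamma (((γ * n : ℝ) : ℂ) + t) := by
    intro γ t; push_cast; rfl
  have hf : (n.factorial : ℂ) = Complex.Gamma (((1 * n : ℝ) : ℂ) + 1) := by
    rw [← Complex.Gamma_nat_eq_factorial]; simp
  have h0 : ((√(2 * Real.pi) : ℝ) : ℂ) ≠ 0 := by
    have : 0 < √(2 * Real.pi) := by positivity
    exact_mod_cast this.ne'
  rw [hg, hg, hg, hf, gamma_of_stS, gamma_of_stS, gamma_of_stS, gamma_of_stS, stR]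
  set s := ((√(2 * Real.pi) : ℝ) : ℂ)
  have hw : ((α ^ α * β ^ (-β) * κ ^ κ : ℝ) : ℂ) ^ n = cexp (n * ((α * Real.log α - β * Real.log β + κ * Real.log κ : ℝ) : ℂ)) := by
    rw [Complex.exp_nat_mul, ← Complex.ofReal_exp]
    congr 2
    rw [Real.rpow_def_of_pos hα, Real.rpow_def_of_pos hβ, Real.rpow_def_of_pos hκ, ← Real.exp_add, ← Real.exp_add]
    congr 1; ring
  have hp : ∀ (γ : ℝ) (hγ : 0 < γ) (t : ℂ), (γ:ℂ) ^ t = cexp (Real.log γ * t) := by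
    intro γ hγ t
    rw [Complex.cpow_def_of_ne_zero (by exact_mod_cast hγ.ne'), Complex.ofReal_log hγ.le]
  rw [hw, hp α hα, hp β hβ, hp κ hκ]
  set Sa := stS a (α * n)
  set Sb := stS b (β * n)
  set Sc := stS c (κ * n)
  set S1 := stS 1 (1 * n)
  have hE : cexp ((((α * n : ℝ):ℂ) + a - 1 / 2) * (Real.log (α * n) : ℝ) - ((α * n : ℝ):ℂ)) *
      cexp ((((κ * n : ℝ):ℂ) + c - 1 / 2) * (Real.log (κ * n) : ℝ) - ((κ * n : ℝ):ℂ)) =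
      (cexp (Real.log α * (a - 1 / 2)) * cexp (Real.log β * (1 / 2 - b)) * cexp (Real.log κ * (c - 1 / 2))) *
      cexp (n * ((α * Real.log α - β * Real.log β + κ * Real.log κ : ℝ) : ℂ)) *
      (cexp ((((β * n : ℝ):ℂ) + b - 1 / 2) * (Real.log (β * n) : ℝ) - ((β * n : ℝ):ℂ)) *
      cexp ((((1 * n : ℝ):ℂ) + 1 - 1 / 2) * (Real.log (1 * n) : ℝ) - ((1 * n : ℝ):ℂ))) := by
    simp only [← Complex.exp_add]
    congr 1
    rw [Real.log_mul hα.ne' hnr.ne', Real.log_mul hβ.ne' hnr.ne', Real.log_mul hκ.ne' hnr.ne', one_mul, hc]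
    push_cast
    have : (κ:ℂ) = 1 + β - α := by rw [hκe]; push_cast; ring
    linear_combination (n * Complex.log n - n) * this
  set Ea := cexp ((((α * n : ℝ):ℂ) + a - 1 / 2) * (Real.log (α * n) : ℝ) - ((α * n : ℝ):ℂ))
  set Ec := cexp ((((κ * n : ℝ):ℂ) + c - 1 / 2) * (Real.log (κ * n) : ℝ) - ((κ * n : ℝ):ℂ))  with hEc
  set Eb := cexp ((((β * n : ℝ):ℂ) + b - 1 / 2) * (Real.log (β * n) : ℝ) - ((β * n : ℝ):ℂ))  with hEb
  set En := cexp ((((1 * n : ℝ):ℂ) + 1 - 1 / 2) * (Real.log (1 * n) : ℝ) - ((1 * n : ℝ):ℂ))  with hEn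
  set P := cexp (Real.log α * (a - 1 / 2)) * cexp (Real.log β * (1 / 2 - b)) * cexp (Real.log κ * (c - 1 / 2))
  set Q := cexp (n * ((α * Real.log α - β * Real.log β + κ * Real.log κ : ℝ) : ℂ))
  have hEc0 : Ec ≠ 0 := Complex.exp_ne_zero _
  have hEb0 : Eb ≠ 0 := Complex.exp_ne_zero _
  have hEn0 : En ≠ 0 := Complex.exp_ne_zero _
  have hEa : Ea = P * Q * (Eb * En) * Ec⁻¹ := by
    rw [← hE]; field_simp
  have k1 : s * s⁻¹ = 1 := mul_inv_cancel₀ h0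
  have k2 : Eb * Eb⁻¹ = 1 := mul_inv_cancel₀ hEb0
  have k3 : En * En⁻¹ = 1 := mul_inv_cancel₀ hEn0
  have k4 : Sc * Sc⁻¹ = 1 := mul_inv_cancel₀ hSc
  rw [hEa]
  simp only [div_eq_mul_inv, mul_inv]
  calc _ = P * Q * Ec⁻¹ * Sa * Sb⁻¹ * S1⁻¹ * s⁻¹ * (s * s⁻¹) * (Eb * Eb⁻¹) * (En * En⁻¹) := by ring
    _ = P * Q * Ec⁻¹ * Sa * Sb⁻¹ * S1⁻¹ * s⁻¹ * (Sc * Sc⁻¹) := by rw [k1, k2, k3, k4]; ring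
    _ = _ := by ring

lemma gamma_ratio_bound (c : ℂ) : ∃ C X : ℝ, 0 ≤ C ∧ ∀ x : ℝ, X ≤ x →
    ‖(Complex.Gamma (x + c))⁻¹‖ ≤ C * x ^ 2 * ‖(Complex.Gamma (x + ((c.re + 2 : ℝ) : ℂ)))⁻¹‖ := by
  have e1 : E1 (stS c) (stP c) := stS_asymp c
  have e2 : E1 (stS ((c.re + 2 : ℝ) : ℂ)) (stP ((c.re + 2 : ℝ) : ℂ)) := stS_asymp _
  have hb := (e2.mul e1.inv).bdd
  obtain ⟨C, hC⟩ := hb.bound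
  obtain ⟨X, hX⟩ := (hC.and ((eventually_gt_atTop 0).and (e1.ne.and e2.ne))).exists_forall_of_atTop
  refine ⟨|C|, X, abs_nonneg _, fun x hx => ?_⟩
  obtain ⟨h1, h2, h3, h4⟩ := hX x hx
  simp only [norm_one, mul_one] at h1
  rw [gamma_of_stS, gamma_of_stS]
  have h0 : ((√(2 * Real.pi) : ℝ) : ℂ) ≠ 0 := by
    have : 0 < √(2 * Real.pi) := by positivity
    exact_mod_cast this.ne'
  set s := ((√(2 * Real.pi) : ℝ) : ℂ)
  simp only [norm_inv, norm_mul, Complex.norm_exp] at h1 ⊢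
  have r1 : ((x + c - 1 / 2) * (Real.log x : ℝ) - x : ℂ).re = (x + c.re - 1 / 2) * Real.log x - x := by
    simp
  have r2 : ((x + ((c.re + 2 : ℝ) : ℂ) - 1 / 2) * (Real.log x : ℝ) - x : ℂ).re = (x + c.re - 1 / 2) * Real.log x - x + 2 * Real.log x := by
    simp; ring
  rw [r1, r2, Real.exp_add, show 2 * Real.log x = Real.log (x ^ 2) by simp, Real.exp_log (by positivity)]
  set E := Real.exp ((x + c.re - 1 / 2) * Real.log x - x) with hE
  have hE0 : 0 < E := Real.exp_pos _
  have p1 : 0 < ‖s‖ := norm_pos_iff.2 h0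
  have p2 : 0 < ‖stS c x‖ := norm_pos_iff.2 h3
  have p3 : 0 < ‖stS ((c.re + 2 : ℝ) : ℂ) x‖ := norm_pos_iff.2 h4
  set u := ‖stS c x‖
  set v := ‖stS ((c.re + 2 : ℝ) : ℂ) x‖
  have : |C| * x ^ 2 * (‖s‖ * v * (E * x ^ 2))⁻¹ = (|C| / v) * (‖s‖ * E)⁻¹ := by field_simp
  rw [this]
  have : (‖s‖ * u * E)⁻¹ = u⁻¹ * (‖s‖ * E)⁻¹ := by field_simp
  rw [this]
  gcongr
  rw [le_div_iff₀ p3, mul_comm]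
  exact h1.trans (le_abs_self C)

lemma coef_expand (κ : ℝ) (hκ : 0 < κ) (c d B : ℂ) (w : ℝ) (hw : 0 < w) (t : ℕ → ℂ) (R : ℝ → ℂ)
    (hR : E1 R d)
    (ht : ∀ᶠ n : ℕ in atTop, t n = B * (w:ℂ) ^ n * (R n / Complex.Gamma ((κ:ℂ) * n + c))) :
    ∃ (N : ℕ) (C : ℝ), 0 ≤ C ∧ 2 ≤ κ * N + c.re ∧ 0 ≤ κ * N + c.re ∧ ∀ n : ℕ, N ≤ n →
      ‖t n - B * (w:ℂ) ^ n * (1 / Complex.Gamma ((κ:ℂ) * n + c) + κ * d * (1 / Complex.Gamma ((κ:ℂ) * n + c + 1)))‖ ≤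
        C * w ^ n * ‖(Complex.Gamma ((κ:ℂ) * n + ((c.re + 2 : ℝ) : ℂ)))⁻¹‖ := by
  obtain ⟨C2, X, hC2, hX⟩ := gamma_ratio_bound c
  obtain ⟨C1, hC1⟩ := (hR.sub (E1_frac κ hκ c d)).bound
  have hnat : Tendsto (fun n : ℕ => (n:ℝ)) atTop atTop := tendsto_natCast_atTop_atTop
  have hκn : Tendsto (fun n : ℕ => κ * (n:ℝ)) atTop atTop := hnat.const_mul_atTop hκ
  have ev := ((hnat.eventually hC1).and (hκn.eventually_ge_atTop X)).and
    ((hκn.eventually_ge_atTop (2 + |c.re|)).and (ht.and (eventually_gt_atTop 0)))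
  obtain ⟨N, hN⟩ := ev.exists_forall_of_atTop
  have hbig : ∀ n : ℕ, N ≤ n → 2 ≤ κ * n + c.re := by
    intro n hn
    have := (hN n hn).2.1
    have := neg_abs_le c.re
    linarith
  refine ⟨N, ‖B‖ * |C1| * C2 * κ ^ 2, by positivity, hbig N le_rfl, by linarith [hbig N le_rfl], fun n hn => ?_⟩
  obtain ⟨⟨h1, h2⟩, h3, h4, h5⟩ := hN n hn
  have hn0 : (0:ℝ) < n := by exact_mod_cast h5
  have hne : (κ:ℂ) * n + c ≠ 0 := by
    intro h; have := congrArg Complex.re h; simp at this; have := hbig n hn; linarith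
  have hg := hX _ h2
  push_cast at hg h1
  rw [h4, Complex.Gamma_add_one _ hne]
  set u := (κ:ℂ) * n + c
  have e : B * (w:ℂ) ^ n * (R n / Complex.Gamma u) - B * (w:ℂ) ^ n * (1 / Complex.Gamma u + κ * d * (1 / (u * Complex.Gamma u))) =
      B * (w:ℂ) ^ n * ((R n - (1 + κ * d / u)) * (Complex.Gamma u)⁻¹) := by
    simp only [div_eq_mul_inv, mul_inv]; ring
  rw [e, norm_mul, norm_mul, norm_mul, norm_pow, Complex.norm_real, Real.norm_of_nonneg hw.le]
  have h1' : ‖R n - (1 + κ * d / u)‖ ≤ |C1| * ((n:ℝ) ^ 2)⁻¹ := by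
    refine h1.trans ?_
    rw [Real.norm_of_nonneg (by positivity)]
    gcongr
    exact le_abs_self _
  calc _ ≤ ‖B‖ * w ^ n * ((|C1| * ((n:ℝ) ^ 2)⁻¹) * (C2 * (κ * n) ^ 2 * ‖(Complex.Gamma ((κ:ℂ) * n + ((c.re + 2 : ℝ) : ℂ)))⁻¹‖)) := by
        gcongr
        simpa using hg
    _ = _ := by field_simp

lemma ml_shift (κ y : ℝ) (hy : 0 < y) (e q : ℂ) (N m : ℕ) :
    (y:ℂ) ^ (1 - q) * ((y:ℂ) ^ ((κ:ℂ) * m + (κ * N + e) - 1) / Complex.Gamma ((κ:ℂ) * m + (κ * N + e))) =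
      (y:ℂ) ^ (e - q) * (((y ^ κ : ℝ) : ℂ) ^ (m + N) * (1 / Complex.Gamma ((κ:ℂ) * (m + N : ℕ) + e))) := by
  have hy0 : (y:ℂ) ≠ 0 := by exact_mod_cast hy.ne'
  have e1 : ((y ^ κ : ℝ) : ℂ) ^ (m + N) = (y:ℂ) ^ ((κ:ℂ) * (m + N : ℕ)) := by
    rw [Complex.ofReal_cpow hy.le, mul_comm, Complex.cpow_nat_mul]
  rw [e1, ← mul_assoc, ← Complex.cpow_add _ _ hy0, mul_one_div, mul_div_assoc', ← Complex.cpow_add _ _ hy0]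
  push_cast
  congr 2 <;> ring

lemma tail_est (κ : ℝ) (hκ : 0 < κ) (c c₁ B : ℂ) (w : ℝ) (t : ℕ → ℂ) (N : ℕ) (C : ℝ) (hC : 0 ≤ C)
    (hN : 2 ≤ κ * N + c.re)
    (ht : ∀ n : ℕ, N ≤ n →
      ‖t n - B * (w:ℂ) ^ n * (1 / Complex.Gamma ((κ:ℂ) * n + c) + c₁ * (1 / Complex.Gamma ((κ:ℂ) * n + c + 1)))‖ ≤
        C * w ^ n * ‖(Complex.Gamma ((κ:ℂ) * n + ((c.re + 2 : ℝ) : ℂ)))⁻¹‖) :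
    ∃ K ε : ℝ, 0 < ε ∧ ∀ x y : ℝ, 0 < x → 1 ≤ y → w * x = y ^ κ → ∃ T : ℂ,
      HasSum (fun m => t (m + N) * (x:ℂ) ^ (m + N)) T ∧
      ‖T - B / κ * (y:ℂ) ^ (1 - c) * cexp y * (1 + c₁ / y)‖ ≤
        K * y ^ (1 - c.re) * Real.exp y * (y ^ (-2:ℝ) + Real.exp (-ε * y)) := by
  obtain ⟨ε1, C1, hε1, hC1, m1⟩ := ml_asymp κ hκ (κ * N + c) (by simpa using hN)
  obtain ⟨ε2, C2, hε2, hC2, m2⟩ := ml_asymp κ hκ (κ * N + (c + 1)) (by simp; linarith)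
  obtain ⟨ε3, C3, hε3, hC3, m3⟩ := ml_asymp κ hκ (κ * N + ((c.re + 2 : ℝ) : ℂ)) (by simp; linarith)
  refine ⟨‖B‖ * C1 + ‖B‖ * ‖c₁‖ * C2 + C * (C3 + 1 / κ), min ε1 ε2, lt_min hε1 hε2, fun x y hx hy hxy => ?_⟩
  have hy0 : 0 < y := by linarith
  have hyc : (y:ℂ) ≠ 0 := by exact_mod_cast hy0.ne'
  have hκc : (κ:ℂ) ≠ 0 := by exact_mod_cast hκ.ne'
  obtain ⟨S1, s1, b1⟩ := m1 y hy0
  obtain ⟨S2, s2, b2⟩ := m2 y hy0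
  obtain ⟨S3, s3, b3⟩ := m3 y hy0
  have hw : 0 < w := by
    by_contra h
    push Not at h
    have : 0 < y ^ κ := by positivity
    nlinarith
  have hwx : (w:ℂ) * x = ((y ^ κ : ℝ) : ℂ) := by rw [← hxy]; push_cast; rfl
  set τ : ℂ := ((c.re + 2 : ℝ) : ℂ) with hτ
  set g1 : ℕ → ℂ := fun n => (y : ℂ) ^ ((κ:ℂ) * n + (κ * N + c) - 1) / Complex.Gamma ((κ:ℂ) * n + (κ * N + c)) with hg1
  set g2 : ℕ → ℂ := fun n => (y : ℂ) ^ ((κ:ℂ) * n + (κ * N + (c + 1)) - 1) / Complex.Gamma ((κ:ℂ) * n + (κ * N + (c + 1))) with hg2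
  set g3 : ℕ → ℂ := fun n => (y : ℂ) ^ ((κ:ℂ) * n + (κ * N + τ) - 1) / Complex.Gamma ((κ:ℂ) * n + (κ * N + τ)) with hg3
  have hg3n : ∀ n, (g3 n).re = ‖g3 n‖ := by
    intro n
    have hr : 0 < κ * n + (κ * N + (c.re + 2)) := by
      have : 0 ≤ κ * n := by positivity
      linarith
    have e : g3 n = ((y ^ (κ * n + (κ * N + (c.re + 2)) - 1) / Real.Gamma (κ * n + (κ * N + (c.re + 2))) : ℝ) : ℂ) := by
      simp only [hg3, hτ]
      rw [Complex.ofReal_div, Complex.ofReal_cpow hy0.le, ← Complex.Gamma_ofReal]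
      push_cast; rfl
    have hp : 0 ≤ y ^ (κ * n + (κ * N + (c.re + 2)) - 1) / Real.Gamma (κ * n + (κ * N + (c.re + 2))) :=
      div_nonneg (by positivity) (Real.Gamma_pos_of_pos hr).le
    rw [e, Complex.ofReal_re, Complex.norm_real, Real.norm_of_nonneg hp]
  have s3n : HasSum (fun n => ‖g3 n‖) S3.re := by
    have := Complex.hasSum_re s3
    simpa only [hg3n] using this
  set Q : ℕ → ℂ := fun m => B * ((y:ℂ) ^ (1 - c) * g1 m + c₁ * ((y:ℂ) ^ (1 - (c + 1)) * g2 m)) with hQ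
  have sQ : HasSum Q (B * ((y:ℂ) ^ (1 - c) * S1 + c₁ * ((y:ℂ) ^ (1 - (c + 1)) * S2))) :=
    ((s1.mul_left _).add ((s2.mul_left _).mul_left _)).mul_left _
  have hnorm : ∀ v : ℂ, ‖(y:ℂ) ^ v‖ = y ^ v.re := fun v => Complex.norm_cpow_eq_rpow_re_of_pos hy0 v
  have hdiff : ∀ m, ‖t (m + N) * (x:ℂ) ^ (m + N) - Q m‖ ≤ C * y ^ (-1 - c.re) * ‖g3 m‖ := by
    intro m
    have h1 := ht (m + N) (Nat.le_add_left _ _)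
    have e1 : (y:ℂ) ^ (1 - c) * g1 m = _ := ml_shift κ y hy0 c c N m
    have e2 : (y:ℂ) ^ (1 - (c + 1)) * g2 m = _ := ml_shift κ y hy0 (c + 1) (c + 1) N m
    have e3 : (y:ℂ) ^ (1 - τ) * g3 m = _ := ml_shift κ y hy0 τ τ N m
    rw [sub_self, Complex.cpow_zero, one_mul] at e1 e2 e3
    have e3' := congrArg norm e3
    rw [norm_mul, hnorm, norm_mul, one_div] at e3'
    have hre : (1 - τ).re = -1 - c.re := by simp [hτ]; ring
    rw [hre] at e3'
    simp only [hQ]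
    rw [mul_assoc C, e3', e1, e2, ← hwx, mul_pow, ← add_assoc]
    have e4 : t (m + N) * (x:ℂ) ^ (m + N) - B * ((w:ℂ) ^ (m + N) * (x:ℂ) ^ (m + N) * (1 / Complex.Gamma ((κ:ℂ) * (m + N : ℕ) + c)) +
        c₁ * ((w:ℂ) ^ (m + N) * (x:ℂ) ^ (m + N) * (1 / Complex.Gamma ((κ:ℂ) * (m + N : ℕ) + c + 1)))) =
        (t (m + N) - B * (w:ℂ) ^ (m + N) * (1 / Complex.Gamma ((κ:ℂ) * (m + N : ℕ) + c) + c₁ * (1 / Complex.Gamma ((κ:ℂ) * (m + N : ℕ) + c + 1)))) * (x:ℂ) ^ (m + N) := by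
      ring
    rw [e4, norm_mul]
    calc _ ≤ C * w ^ (m + N) * ‖(Complex.Gamma ((κ:ℂ) * (m + N : ℕ) + τ))⁻¹‖ * ‖(x:ℂ) ^ (m + N)‖ := by gcongr
      _ = _ := by
        rw [norm_mul, norm_pow (w:ℂ), Complex.norm_real, Real.norm_of_nonneg hw.le]; ring
  have sb := s3n.mul_left (C * y ^ (-1 - c.re))
  have sd : Summable (fun m => t (m + N) * (x:ℂ) ^ (m + N) - Q m) := Summable.of_norm_bounded sb.summable hdiff
  have bE := tsum_of_norm_bounded sb hdiff
  set E := ∑' m, (t (m + N) * (x:ℂ) ^ (m + N) - Q m)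
  have sT : HasSum (fun m => t (m + N) * (x:ℂ) ^ (m + N))
      (B * ((y:ℂ) ^ (1 - c) * S1 + c₁ * ((y:ℂ) ^ (1 - (c + 1)) * S2)) + E) := by
    have := sQ.add sd.hasSum
    simp only [add_sub_cancel] at this
    exact this
  refine ⟨_, sT, ?_⟩
  have hy1c : (y:ℂ) ^ (1 - (c + 1)) = (y:ℂ) ^ (1 - c) / y := by
    rw [show 1 - (c + 1) = (1 - c) - 1 by ring, Complex.cpow_sub _ _ hyc, Complex.cpow_one]
  have e5 : B * ((y:ℂ) ^ (1 - c) * S1 + c₁ * ((y:ℂ) ^ (1 - (c + 1)) * S2)) + E - B / κ * (y:ℂ) ^ (1 - c) * cexp y * (1 + c₁ / y) =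
      B * (y:ℂ) ^ (1 - c) * (S1 - cexp y / κ) + B * c₁ * (y:ℂ) ^ (1 - (c + 1)) * (S2 - cexp y / κ) + E := by
    rw [hy1c]; ring
  rw [e5]
  have hexp : ∀ ε' : ℝ, min ε1 ε2 ≤ ε' → Real.exp ((1 - ε') * y) ≤ Real.exp y * Real.exp (-min ε1 ε2 * y) := by
    intro ε' h
    rw [← Real.exp_add]
    gcongr
    nlinarith
  have n1 : ‖B * (y:ℂ) ^ (1 - c) * (S1 - cexp y / κ)‖ ≤ ‖B‖ * y ^ (1 - c.re) * (C1 * (Real.exp y * Real.exp (-min ε1 ε2 * y))) := by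
    rw [norm_mul, norm_mul, hnorm]
    have : (1 - c).re = 1 - c.re := by simp
    rw [this]
    gcongr
    refine b1.trans ?_
    gcongr
    exact hexp _ (min_le_left _ _)
  have n2 : ‖B * c₁ * (y:ℂ) ^ (1 - (c + 1)) * (S2 - cexp y / κ)‖ ≤ ‖B‖ * ‖c₁‖ * y ^ (1 - c.re) * (C2 * (Real.exp y * Real.exp (-min ε1 ε2 * y))) := by
    rw [norm_mul, norm_mul, norm_mul, hnorm]
    have : y ^ (1 - (c + 1)).re ≤ y ^ (1 - c.re) := Real.rpow_le_rpow_of_exponent_le hy (by simp)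
    gcongr
    refine b2.trans ?_
    gcongr
    exact hexp _ (min_le_right _ _)
  have n3 : S3.re ≤ (C3 + 1 / κ) * Real.exp y := by
    have h1 : ‖cexp y / κ‖ = 1 / κ * Real.exp y := by
      rw [norm_div, Complex.norm_exp, Complex.norm_real, Real.norm_of_nonneg hκ.le]; simp; ring
    have h2 := norm_sub_norm_le S3 (cexp y / κ)
    have h3 := Complex.re_le_norm S3
    have h4 : C3 * Real.exp ((1 - ε3) * y) ≤ C3 * Real.exp y := by
      gcongr; nlinarith
    rw [h1] at h2
    linarith
  have hyy : y ^ (-1 - c.re) = y ^ (1 - c.re) * y ^ (-2:ℝ) := by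
    rw [← Real.rpow_add hy0]; congr 1; ring
  have n4 : ‖E‖ ≤ C * (y ^ (1 - c.re) * y ^ (-2:ℝ)) * ((C3 + 1 / κ) * Real.exp y) := by
    rw [← hyy]
    refine bE.trans ?_
    gcongr
  refine (norm_add₃_le).trans ?_
  set Y := y ^ (1 - c.re)
  have hY : 0 < Y := by positivity
  set U := y ^ (-2:ℝ)
  have hU : 0 < U := by positivity
  set V := Real.exp (-min ε1 ε2 * y)
  have hV : 0 < V := Real.exp_pos _
  set W := Real.exp y
  have hW : 0 < W := Real.exp_pos _
  have k1 : 0 ≤ ‖B‖ * C1 * Y * W * U := by positivity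
  have k2 : 0 ≤ ‖B‖ * ‖c₁‖ * C2 * Y * W * U := by positivity
  have k3 : 0 ≤ C * (C3 + 1 / κ) * Y * W * V := by positivity
  calc _ ≤ ‖B‖ * Y * (C1 * (W * V)) + ‖B‖ * ‖c₁‖ * Y * (C2 * (W * V)) + C * (Y * U) * ((C3 + 1 / κ) * W) := by gcongr
    _ ≤ ‖B‖ * Y * (C1 * (W * V)) + ‖B‖ * ‖c₁‖ * Y * (C2 * (W * V)) + C * (Y * U) * ((C3 + 1 / κ) * W) +
        (‖B‖ * C1 * Y * W * U + ‖B‖ * ‖c₁‖ * C2 * Y * W * U + C * (C3 + 1 / κ) * Y * W * V) := by linarith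
    _ = _ := by ring

end Helpers

/-- Two-term exponential asymptotic expansion of the Wright function on the positive real
axis: `₁Ψ₁((α,a);(β,b) | x) = A Z^ϑ e^Z (1 + c₁/Z + O(Z^{−2}))` as `x → +∞`, where
`κ = 1 + β − α`, `h = α^α β^{−β}`, `ϑ = a − b`, `A = κ^{−ϑ−1/2} α^{a−1/2} β^{1/2−b}`,
`Z = κ (hx)^{1/κ}` and `c₁` is the first correction coefficient. -/
theorem wright_two_term_asymptotics (α β : ℝ) (hα : 0 < α) (hβ : 0 < β)
    (hκ : 0 < 1 + β - α) (a b : ℂ)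
    (hpole : ∀ n m : ℕ, (α : ℂ) * (n : ℂ) + a ≠ -(m : ℂ))
    (h : ℝ) (hh : h = α ^ α * β ^ (-β))
    (ϑ : ℂ) (hϑ : ϑ = a - b)
    (A : ℂ) (hA : A = ((1 + β - α : ℝ) : ℂ) ^ (-ϑ - 1 / 2) *
      ((α : ℝ) : ℂ) ^ (a - 1 / 2) * ((β : ℝ) : ℂ) ^ (1 / 2 - b))
    (Z : ℝ → ℝ) (hZ : ∀ x : ℝ, Z x = (1 + β - α) * (h * x) ^ (1 / (1 + β - α)))
    (c₁ : ℂ) (hc₁ : c₁ = (1 / (12 * (α : ℂ) * (β : ℂ))) *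
      ((α : ℂ) * ((α : ℂ) - 1) * (1 - 6 * b + 6 * b ^ 2) +
        (β : ℂ) * ((β : ℂ) + 1) * (1 - 6 * a + 6 * a ^ 2) +
        (α : ℂ) * (β : ℂ) * ((α : ℂ) - (β : ℂ) - 2 * (1 + 6 * a * b - 6 * b)))) :
    (fun x : ℝ =>
        wright α β a b (x : ℂ) / (A * ((Z x : ℝ) : ℂ) ^ ϑ * Complex.exp ((Z x : ℝ) : ℂ)) -
          (1 + c₁ / ((Z x : ℝ) : ℂ)))
      =O[atTop] fun x : ℝ => (Z x) ^ (-2 : ℝ) := by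
  set κ : ℝ := 1 + β - α with hκe
  have hκc : (κ:ℂ) ≠ 0 := by exact_mod_cast hκ.ne'
  have hαc : (α:ℂ) ≠ 0 := by exact_mod_cast hα.ne'
  have hβc : (β:ℂ) ≠ 0 := by exact_mod_cast hβ.ne'
  have hκe' : (κ:ℂ) = 1 + β - α := by rw [hκe]; push_cast; ring
  set c : ℂ := 1 - ϑ with hc
  have hh0 : 0 < h := by rw [hh]; positivity
  set w : ℝ := α ^ α * β ^ (-β) * κ ^ κ with hw
  have hw0 : 0 < w := by positivity
  set B : ℂ := (α:ℂ) ^ (a - 1 / 2) * (β:ℂ) ^ (1 / 2 - b) * (κ:ℂ) ^ (c - 1 / 2) with hB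
  set d : ℂ := stP a / α + stP c / κ + -(stP b / β + stP 1 / (1:ℝ)) with hd
  have hc1 : c₁ = κ * d := by
    rw [hc₁, hd, hc, hϑ]
    simp only [stP]
    have : (1 + (β:ℂ) - α) ≠ 0 := by rw [← hκe']; exact hκc
    rw [hκe']
    push_cast
    field_simp
    ring
  have hAB : A = B / κ := by
    rw [hA, hB, show -ϑ - 1 / 2 = (c - 1 / 2) - 1 by rw [hc]; ring, Complex.cpow_sub _ _ hκc, Complex.cpow_one]
    ring
  have hA0 : A ≠ 0 := by
    rw [hA]
    refine mul_ne_zero (mul_ne_zero ?_ ?_) ?_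
    · rw [Complex.cpow_def_of_ne_zero hκc]; exact Complex.exp_ne_zero _
    · rw [Complex.cpow_def_of_ne_zero hαc]; exact Complex.exp_ne_zero _
    · rw [Complex.cpow_def_of_ne_zero hβc]; exact Complex.exp_ne_zero _
  set t : ℕ → ℂ := fun n => Complex.Gamma ((α:ℂ) * n + a) / Complex.Gamma ((β:ℂ) * n + b) / n.factorial with ht
  have hnat : Tendsto (fun n : ℕ => κ * (n:ℝ)) atTop atTop := tendsto_natCast_atTop_atTop.const_mul_atTop hκ
  have hte : ∀ᶠ n : ℕ in atTop, t n = B * (w:ℂ) ^ n * (stR α β κ a b c n / Complex.Gamma ((κ:ℂ) * n + c)) := by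
    filter_upwards [hnat.eventually (stS_E1 c).ne, eventually_gt_atTop 0] with n h1 h2
    exact coef_eq α β κ hα hβ hκ hκe a b c (by rw [hc, hϑ]) n h2 h1
  obtain ⟨N, C, hC, hN, -, hexp⟩ := coef_expand κ hκ c d B w hw0 t _ (E1_stR α β κ hα hβ hκ a b c) hte
  rw [← hc1] at hexp
  obtain ⟨K, ε, hε, hK⟩ := tail_est κ hκ c c₁ B w t N C hC hN hexp
  have hZt : Tendsto Z atTop atTop := by
    have h1 : Tendsto (fun x : ℝ => κ * (h * x) ^ (1 / κ)) atTop atTop :=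
      ((tendsto_rpow_atTop (by positivity)).comp (tendsto_id.const_mul_atTop hh0)).const_mul_atTop hκ
    exact h1.congr fun x => (hZ x).symm
  have hZw : ∀ x : ℝ, 0 < x → w * x = Z x ^ κ := by
    intro x hx
    rw [hZ, Real.mul_rpow hκ.le (by positivity), ← Real.rpow_mul (by positivity), one_div, inv_mul_cancel₀ hκ.ne', Real.rpow_one, hw, hh]
    ring
  have hW : ∀ x : ℝ, wright α β a b x = ∑' n, t n * (x:ℂ) ^ n := by
    intro x
    rw [wright]
    congr 1; funext n
    rw [ht]; ring
  have hre : ϑ.re = 1 - c.re := by simp [hc]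
  have hden : ∀ y : ℝ, 0 < y → ‖A * (y:ℂ) ^ ϑ * cexp y‖ = ‖A‖ * y ^ (1 - c.re) * Real.exp y := by
    intro y hy
    rw [norm_mul, norm_mul, Complex.norm_cpow_eq_rpow_re_of_pos hy, Complex.norm_exp, hre, Complex.ofReal_re]
  have hAn : 0 < ‖A‖ := norm_pos_iff.2 hA0
  -- the head
  have hhead : (fun x : ℝ => (∑ n ∈ Finset.range N, t n * (x:ℂ) ^ n) / (A * ((Z x : ℝ) : ℂ) ^ ϑ * cexp ((Z x : ℝ) : ℂ)))
      =O[atTop] fun x : ℝ => (Z x) ^ (-2 : ℝ) := by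
    simp only [Finset.sum_div]
    refine IsBigO.fun_sum fun n _ => ?_
    have h1 := (isLittleO_exp_neg_mul_rpow_atTop one_pos (-2 - (κ * n - (1 - c.re)))).isBigO
    obtain ⟨M, hM⟩ := (h1.comp_tendsto hZt).bound
    refine IsBigO.of_bound (‖t n‖ * (w ^ n)⁻¹ * ‖A‖⁻¹ * M) ?_
    filter_upwards [hM, eventually_gt_atTop 0, hZt.eventually_ge_atTop 1] with x hx hx0 hy
    have hy0 : 0 < Z x := by linarith
    simp only [Function.comp] at hx
    rw [Real.norm_of_nonneg (Real.exp_pos _).le, Real.norm_of_nonneg (by positivity)] at hx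
    rw [norm_div, hden _ hy0, norm_mul, norm_pow, Complex.norm_real, Real.norm_of_nonneg hx0.le, Real.norm_of_nonneg (by positivity)]
    have hxe : x ^ n = (w ^ n)⁻¹ * Z x ^ (κ * n) := by
      rw [Real.rpow_mul hy0.le, ← hZw x hx0, Real.rpow_natCast, mul_pow w x n, ← mul_assoc,
        inv_mul_cancel₀ (pow_pos hw0 n).ne', one_mul]
    have he : Real.exp (-1 * Z x) = (Real.exp (Z x))⁻¹ := by rw [← Real.exp_neg]; congr 1; ring
    rw [he] at hx
    have hp1 : Z x ^ (κ * n) * (Z x ^ (1 - c.re))⁻¹ = Z x ^ (κ * n - (1 - c.re)) := by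
      rw [Real.rpow_sub hy0 (κ * n), div_eq_mul_inv]
    have hp2 : Z x ^ (κ * n - (1 - c.re)) * Z x ^ (-2 - (κ * n - (1 - c.re))) = Z x ^ (-2:ℝ) := by
      rw [← Real.rpow_add hy0]; congr 1; ring
    calc _ = ‖t n‖ * (w ^ n)⁻¹ * ‖A‖⁻¹ * (Z x ^ (κ * n) * (Z x ^ (1 - c.re))⁻¹) * (Real.exp (Z x))⁻¹ := by
          rw [hxe, div_eq_mul_inv, mul_inv, mul_inv]; ring
      _ ≤ ‖t n‖ * (w ^ n)⁻¹ * ‖A‖⁻¹ * (Z x ^ (κ * n) * (Z x ^ (1 - c.re))⁻¹) * (M * Z x ^ (-2 - (κ * n - (1 - c.re)))) := by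
          gcongr
      _ = ‖t n‖ * (w ^ n)⁻¹ * ‖A‖⁻¹ * M * (Z x ^ (κ * n - (1 - c.re)) * Z x ^ (-2 - (κ * n - (1 - c.re)))) := by
          rw [hp1]; ring
      _ = _ := by rw [hp2]
  -- the tail
  have htail : (fun x : ℝ => (wright α β a b (x : ℂ) - ∑ n ∈ Finset.range N, t n * (x:ℂ) ^ n) /
        (A * ((Z x : ℝ) : ℂ) ^ ϑ * cexp ((Z x : ℝ) : ℂ)) - (1 + c₁ / ((Z x : ℝ) : ℂ)))
      =O[atTop] fun x : ℝ => (Z x) ^ (-2 : ℝ) := by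
    have h1 := (isLittleO_exp_neg_mul_rpow_atTop hε (-2)).isBigO
    have h2 : (fun y : ℝ => y ^ (-2:ℝ) + Real.exp (-ε * y)) =O[atTop] fun y : ℝ => y ^ (-2:ℝ) :=
      (isBigO_refl _ _).add h1
    refine IsBigO.trans ?_ (h2.comp_tendsto hZt)
    refine IsBigO.of_bound (K / ‖A‖) ?_
    filter_upwards [eventually_gt_atTop 0, hZt.eventually_ge_atTop 1] with x hx0 hy
    have hy0 : 0 < Z x := by linarith
    obtain ⟨T, hT, hb⟩ := hK x (Z x) hx0 hy (hZw x hx0)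
    have hs : Summable (fun n => t n * (x:ℂ) ^ n) := (summable_nat_add_iff N).1 hT.summable
    have e1 : wright α β a b x - ∑ n ∈ Finset.range N, t n * (x:ℂ) ^ n = T := by
      rw [hW, ← hs.sum_add_tsum_nat_add N, hT.tsum_eq]; ring
    have hdn := hden _ hy0
    have hd0 : A * ((Z x : ℝ) : ℂ) ^ ϑ * cexp ((Z x : ℝ) : ℂ) ≠ 0 := by
      rw [← norm_pos_iff, hdn]; positivity
    rw [← hAB, show 1 - c = ϑ by rw [hc]; ring] at hb
    rw [e1]
    have e2 : T / (A * ((Z x : ℝ) : ℂ) ^ ϑ * cexp ((Z x : ℝ) : ℂ)) - (1 + c₁ / ((Z x : ℝ) : ℂ)) =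
        (T - A * ((Z x : ℝ) : ℂ) ^ ϑ * cexp ((Z x : ℝ) : ℂ) * (1 + c₁ / ((Z x : ℝ) : ℂ))) / (A * ((Z x : ℝ) : ℂ) ^ ϑ * cexp ((Z x : ℝ) : ℂ)) := by
      rw [sub_div, mul_div_cancel_left₀ _ hd0]
    rw [e2, norm_div, hdn, div_le_iff₀ (by positivity)]
    refine hb.trans (le_of_eq ?_)
    simp only [Function.comp]
    rw [Real.norm_of_nonneg (by positivity)]
    field_simp
  refine (htail.add hhead).congr_left fun x => ?_
  rw [sub_div]; ring
end
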